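/- (Theorem 1(i), elliptic regime, Lyapunov exponent.) Let E_b be a band edge (no band touching) of the periodic background operator H_0 of the family of random Jacobi matrices (H_{λ,ω})_{λ≥0}, and assume the perturbation is non-trivial at the band edge, i.e. 𝐄_σ(x_σ²) > 0. Let 4/5 < η < 4/3 and let ε ≠ 0 have the sign such that E_b + ελ^η lies inside the band of H_0 for all small λ > 0 (equivalently |Tr(𝒯^{E_b+ελ^η}_{0,σ})| < 2 for small λ > 0). Then for small λ > 0 the limit defining the Lyapunov exponent γ_λ(E_b+ελ^η) exists and γ_λ(E_b+ελ^η) = λ^{2−η} · 𝐄_σ(x_σ²)/(8 L |ε x|) + O(λ^{3η/2} + λ^{4−5η/2}); in particular γ_λ(E_b+ελ^η) = B λ^{2−η} + O(λ^{2−η+δ}) with B = 𝐄_σ(x_σ²)/(8L|εx|) and some δ > 0. -/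

import Mathlib

/-!
A real 2×2 matrix acts on `ℂ = ℝ²` as `z ↦ a z + b conj z`. For determinant one, `log |a|` agrees
with the logarithm of the norm up to a bounded error, and left multiplication moves `ζ = b / conj a`
by a Möbius map of the closed unit disc while `log |a|` increases by an explicit function of `ζ`.
Adding a bounded corrector `Re (α ζ + β ζ²)` to `log |a|` does not change the exponent. If the mean
increment of the corrected logarithm is within `err` of a constant `v` for every `ζ` in the disc,
then the exponent, which exists by subadditivity, is within `err` of `v`; no information on the
invariant measure is needed.

For a rotation by `w` perturbed by centered noise whose two complex coordinates are both close to
`i τ`, the mean increment is `𝐄 τ² Re (1 + ζ)² / 2` to second order. Its terms of degree one and two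
in `ζ` oscillate under the rotation and are removed by the correctors, which leaves `𝐄 τ² / 2`.

To reach this situation, put `θ = λ^(η/2)` and `κ = λ^(1-η/2)`, so that `λ = κ θ` and the energy
offset is `ε θ²`. Since the derivative of the trace is non-zero, the transfer matrix at the band
edge is not `±1`, hence is conjugate to `±` a Jordan block, and in that basis the lower left entry
of the noise is `± x_σ`. Inside the band the unperturbed matrix is elliptic with rotation angle of
order `√|ε x| θ`. The conjugation turning it into a rotation amplifies the lower left entry of the
noise by `1 / θ`, which gives noise of size `κ` with `τ ≈ κ x_σ / (2 √|ε x|)`. Thus the exponent per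
cell is `κ² 𝐄 x_σ² / (8 |ε x|) + O(θ³ + κ⁴ / θ)`.
-/

/- Statement 0: Theorem 1(i), elliptic regime: asymptotics of the Lyapunov
exponent of a weakly random Jacobi matrix near a band edge. -/

open MeasureTheory Filter Real Set

namespace BandEdge

/-- The one-site transfer matrix `𝒯^E(t,v)`. -/
noncomputable def transfer (E t v : ℝ) : Matrix (Fin 2) (Fin 2) ℝ :=
  !![(E - v) / t, -t; 1 / t, 0]

/-- An explicit (Frobenius) norm on 2×2 real matrices. -/
noncomputable def matNorm (A : Matrix (Fin 2) (Fin 2) ℝ) : ℝ :=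
  Real.sqrt (∑ i, ∑ j, (A i j) ^ 2)

/-- The transfer matrix `𝒯^E_{λ,σ}` over one unit cell of length `L`:
the ordered product of the one-site transfer matrices with coefficients
`t̂_l + λ t̃_l(σ)` and `v̂_l + λ ṽ_l(σ)`. -/
noncomputable def cellT (L : ℕ) (that vhat : ℕ → ℝ) {S : Type*} (ttil vtil : ℕ → S → ℝ)
    (lam E : ℝ) (σ : S) : Matrix (Fin 2) (Fin 2) ℝ :=
  (List.ofFn (fun l : Fin L =>
    transfer E (that l + lam * ttil l σ) (vhat l + lam * vtil l σ))).prod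

/-- The finite-volume approximation `(LN)⁻¹ 𝐄 log ‖𝒯^E_{λ,σ_N} ⋯ 𝒯^E_{λ,σ_1}‖`
of the Lyapunov exponent, the expectation being over i.i.d. `σ_1,…,σ_N` with law `μ`. -/
noncomputable def lyapFin (L : ℕ) (that vhat : ℕ → ℝ) {S : Type*} [MeasurableSpace S]
    (μ : Measure S) (ttil vtil : ℕ → S → ℝ) (lam E : ℝ) (N : ℕ) : ℝ :=
  ((L : ℝ) * N)⁻¹ *
    ∫ ω : Fin N → S,
      Real.log (matNorm
        (List.ofFn (fun n : Fin N => cellT L that vhat ttil vtil lam E (ω n))).prod)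
      ∂(Measure.pi fun _ => μ)

lemma abs_integral_sub_integral_le {X : Type*} [MeasurableSpace X] {ν : Measure X}
    [IsProbabilityMeasure ν] {f g : X → ℝ} {C : ℝ} (hf : Integrable f ν) (hg : Integrable g ν)
    (hfg : ∀ x, |f x - g x| ≤ C) : |∫ x, f x ∂ν - ∫ x, g x ∂ν| ≤ C := by
  rw [← integral_sub hf hg]
  simpa using norm_integral_le_of_norm_le_const (μ := ν) (f := fun x => f x - g x)
    (Eventually.of_forall hfg)

/-- The ordered product `T (ω 0) * T (ω 1) * ⋯ * T (ω (n - 1))`. -/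
def orderedProd {S A : Type*} [Monoid A] (T : S → A) (n : ℕ) (ω : Fin n → S) : A :=
  (List.ofFn fun i => T (ω i)).prod

section OrderedProd

variable {S A : Type*} [Monoid A] {T : S → A}

lemma orderedProd_zero (T : S → A) (ω : Fin 0 → S) : orderedProd T 0 ω = 1 := by
  simp [orderedProd]

lemma orderedProd_succ (T : S → A) (n : ℕ) (ω : Fin (n + 1) → S) :
    orderedProd T (n + 1) ω = T (ω 0) * orderedProd T n fun i => ω i.succ := by
  simp [orderedProd]

lemma orderedProd_add (T : S → A) (m n : ℕ) (ω : Fin (m + n) → S) :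
    orderedProd T (m + n) ω =
      orderedProd T m (fun i => ω (i.castLE (Nat.le_add_right m n))) *
        orderedProd T n fun i => ω (i.natAdd m) := by
  simp [orderedProd, List.ofFn_add]

lemma orderedProd_mem {U : Submonoid A} (hU : ∀ s, T s ∈ U) (n : ℕ) (ω : Fin n → S) :
    orderedProd T n ω ∈ U := by
  refine U.list_prod_mem fun P hP => ?_
  obtain ⟨i, rfl⟩ := List.mem_ofFn.mp hP
  exact hU _

lemma orderedProd_units_conj (T : S → A) (M : Aˣ) (n : ℕ) (ω : Fin n → S) :
    orderedProd (fun s => M * T s * ↑M⁻¹) n ω = M * orderedProd T n ω * ↑M⁻¹ := by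
  induction n with
  | zero => simp [orderedProd_zero]
  | succ n ih => rw [orderedProd_succ, orderedProd_succ, ih]; simp [mul_assoc]

lemma orderedProd_neg {A : Type*} [Ring A] (T : S → A) (n : ℕ) (ω : Fin n → S) :
    orderedProd (fun s => -T s) n ω = (-1) ^ n * orderedProd T n ω := by
  induction n with
  | zero => simp [orderedProd_zero]
  | succ n ih =>
    rw [orderedProd_succ, orderedProd_succ, ih, ← mul_assoc,
      ← ((Commute.neg_one_left (-T (ω 0))).pow_left n).eq, pow_succ]
    noncomm_ring

lemma norm_orderedProd_le {A : Type*} [NormedRing A] {T : S → A} {K : ℝ} (hT : ∀ s, ‖T s‖ ≤ K)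
    (n : ℕ) (ω : Fin n → S) :
    ‖orderedProd T n ω‖ ≤ ‖(1 : A)‖ * K ^ n := by
  induction n with
  | zero => simp [orderedProd_zero]
  | succ n ih =>
    rw [orderedProd_succ]
    calc ‖T (ω 0) * orderedProd T n fun i => ω i.succ‖
        ≤ ‖T (ω 0)‖ * ‖orderedProd T n fun i => ω i.succ‖ := norm_mul_le _ _
      _ ≤ K * (‖(1 : A)‖ * K ^ n) := by
        gcongr
        exacts [(norm_nonneg _).trans (hT (ω 0)), hT _, ih _]
      _ = ‖(1 : A)‖ * K ^ (n + 1) := by ring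

lemma abs_log_norm_units_conj_sub_le {A : Type*} [NormedRing A] (M : Aˣ)
    {P : A} (hP : P ≠ 0) :
    |log ‖(M * P * ↑M⁻¹ : A)‖ - log ‖P‖| ≤ log (‖(M : A)‖ * ‖(↑M⁻¹ : A)‖) := by
  have : Nontrivial A := ⟨P, 0, hP⟩
  have hM : 0 < ‖(M : A)‖ * ‖(↑M⁻¹ : A)‖ :=
    mul_pos (norm_pos_iff.mpr M.ne_zero) (norm_pos_iff.mpr M⁻¹.ne_zero)
  have hconj (M : Aˣ) (P : A) : ‖(M * P * ↑M⁻¹ : A)‖ ≤ ‖(M : A)‖ * ‖(↑M⁻¹ : A)‖ * ‖P‖ := by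
    refine (norm_mul_le _ _).trans ?_
    rw [mul_right_comm]
    gcongr
    exact norm_mul_le _ _
  have hQ : (M * P * ↑M⁻¹ : A) ≠ 0 := by simpa using hP
  have hle := log_le_log (norm_pos_iff.mpr hQ) (hconj M P)
  have hge := log_le_log (norm_pos_iff.mpr hP)
    (show ‖P‖ ≤ ‖(M : A)‖ * ‖(↑M⁻¹ : A)‖ * ‖(M * P * ↑M⁻¹ : A)‖ by
      simpa [mul_assoc, mul_comm ‖(↑M⁻¹ : A)‖, mul_left_comm ‖(↑M⁻¹ : A)‖]
        using hconj M⁻¹ (M * P * ↑M⁻¹))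
  rw [log_mul hM.ne' (norm_pos_iff.mpr hP).ne'] at hle
  rw [log_mul hM.ne' (norm_pos_iff.mpr hQ).ne'] at hge
  rw [abs_le]
  constructor <;> linarith

end OrderedProd

section LyapunovExponent

variable {S A : Type*} [MeasurableSpace S] [NormedRing A] {μ : Measure S} {T : S → A} {K : ℝ}
  {U : Submonoid A}

/-- `γ` is the Lyapunov exponent of the product of i.i.d. copies of the random element `T` of a
normed ring: the limit of `𝐄 log ‖T (ω 0) ⋯ T (ω (n - 1))‖ / n`. -/
def HasLyapunovExponent (μ : Measure S) (T : S → A) (γ : ℝ) : Prop :=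
  Tendsto (fun n : ℕ => (∫ ω, log ‖orderedProd T n ω‖ ∂Measure.pi fun _ : Fin n => μ) / n)
    atTop (nhds γ)

lemma HasLyapunovExponent.of_abs_sub_le {B : Type*} [NormedRing B] {T' : S → B} {γ C : ℝ}
    (h : HasLyapunovExponent μ T γ)
    (hC : ∀ n : ℕ, |(∫ ω, log ‖orderedProd T' n ω‖ ∂Measure.pi fun _ : Fin n => μ) -
      ∫ ω, log ‖orderedProd T n ω‖ ∂Measure.pi fun _ : Fin n => μ| ≤ C) :
    HasLyapunovExponent μ T' γ := by
  refine h.congr_dist (squeeze_zero (fun _ => dist_nonneg) (fun n => ?_)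
    (tendsto_const_div_atTop_nhds_zero_nat C))
  rw [dist_comm, Real.dist_eq, ← sub_div, abs_div, Nat.abs_cast]
  gcongr
  exact hC n

lemma stronglyMeasurable_orderedProd (hT : StronglyMeasurable T) (n : ℕ) :
    StronglyMeasurable (orderedProd T n) := by
  induction n with
  | zero =>
    rw [funext (orderedProd_zero T)]
    exact stronglyMeasurable_const
  | succ n ih =>
    rw [funext (orderedProd_succ T n)]
    exact (hT.comp_measurable (measurable_pi_apply 0)).mul
      (ih.comp_measurable (measurable_pi_lambda _ fun i => measurable_pi_apply i.succ))

lemma HasLyapunovExponent.of_neg {γ : ℝ} (h : HasLyapunovExponent μ (fun s => -T s) γ) :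
    HasLyapunovExponent μ T γ := by
  refine h.of_abs_sub_le (C := 0) fun n => ?_
  have hnorm (ω : Fin n → S) : ‖orderedProd (fun s => -T s) n ω‖ = ‖orderedProd T n ω‖ := by
    rw [orderedProd_neg]
    rcases neg_one_pow_eq_or A n with h | h <;> simp [h]
  simp [hnorm]

variable [IsProbabilityMeasure μ]

lemma integrable_log_norm_orderedProd (hTm : StronglyMeasurable T) (hT : ∀ s, ‖T s‖ ≤ K)
    (hU : ∀ s, T s ∈ U) (hone : ∀ P ∈ U, 1 ≤ ‖P‖) (n : ℕ) :
    Integrable (fun ω => log ‖orderedProd T n ω‖) (Measure.pi fun _ : Fin n => μ) := by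
  refine .of_bound (stronglyMeasurable_orderedProd hTm n).norm.measurable.log.aestronglyMeasurable
    (log (‖(1 : A)‖ * K ^ n)) (Eventually.of_forall fun ω => ?_)
  rw [norm_of_nonneg (log_nonneg (hone _ (orderedProd_mem hU n ω)))]
  exact log_le_log (by linarith [hone _ (orderedProd_mem hU n ω)]) (norm_orderedProd_le hT n ω)

lemma measurePreserving_pi_comp {m n : ℕ} {g : Fin m → Fin n} (hg : Function.Injective g) :
    MeasurePreserving (fun (ω : Fin n → S) i => ω (g i))
      (Measure.pi fun _ => μ) (Measure.pi fun _ => μ) := by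
  refine ⟨measurable_pi_lambda _ fun i => measurable_pi_apply (g i), ?_⟩
  have hindep := (ProbabilityTheory.iIndepFun_pi (μ := fun _ : Fin n => μ) (X := fun _ s => s)
    fun _ => aemeasurable_id).precomp hg
  rw [(ProbabilityTheory.iIndepFun_iff_map_fun_eq_pi_map
    fun i => (measurable_pi_apply (g i)).aemeasurable).mp hindep]
  exact congrArg Measure.pi
    (funext fun i => (measurePreserving_eval (fun _ : Fin n => μ) (g i)).map_eq)

lemma subadditive_integral_log_norm_orderedProd (hTm : StronglyMeasurable T)
    (hT : ∀ s, ‖T s‖ ≤ K) (hU : ∀ s, T s ∈ U) (hone : ∀ P ∈ U, 1 ≤ ‖P‖) :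
    Subadditive fun n : ℕ =>
      ∫ ω, log ‖orderedProd T n ω‖ ∂Measure.pi fun _ : Fin n => μ := by
  have hinteg := integrable_log_norm_orderedProd (μ := μ) hTm hT hU hone
  have hpull {k n : ℕ} {g : Fin k → Fin n} (hg : Function.Injective g) :
      Integrable (fun ω => log ‖orderedProd T k fun i => ω (g i)‖)
          (Measure.pi fun _ : Fin n => μ) ∧
        ∫ ω, log ‖orderedProd T k fun i => ω (g i)‖ ∂(Measure.pi fun _ : Fin n => μ) =
          ∫ ω, log ‖orderedProd T k ω‖ ∂Measure.pi fun _ : Fin k => μ := by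
    have hmp := measurePreserving_pi_comp (μ := μ) hg
    refine ⟨hmp.integrable_comp_of_integrable (hinteg k), ?_⟩
    rw [← hmp.map_eq, integral_map hmp.measurable.aemeasurable]
    rw [hmp.map_eq]
    exact (hinteg k).aestronglyMeasurable
  intro m n
  obtain ⟨hinteg₁, heq₁⟩ := hpull (Fin.castLE_injective (Nat.le_add_right m n))
  obtain ⟨hinteg₂, heq₂⟩ := hpull (Fin.natAdd_injective n m)
  simp only
  rw [← heq₁, ← heq₂, ← integral_add hinteg₁ hinteg₂]
  refine integral_mono (hinteg (m + n)) (hinteg₁.add hinteg₂) fun ω => ?_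
  have hpos (k : ℕ) (ω : Fin k → S) : 0 < ‖orderedProd T k ω‖ :=
    one_pos.trans_le (hone _ (orderedProd_mem hU k ω))
  simp only
  rw [← log_mul (hpos _ _).ne' (hpos _ _).ne', orderedProd_add]
  exact log_le_log (orderedProd_add T m n ω ▸ hpos _ _) (norm_mul_le _ _)

lemma exists_hasLyapunovExponent (hTm : StronglyMeasurable T) (hT : ∀ s, ‖T s‖ ≤ K)
    (hU : ∀ s, T s ∈ U) (hone : ∀ P ∈ U, 1 ≤ ‖P‖) : ∃ γ, HasLyapunovExponent μ T γ := by
  have hsub := subadditive_integral_log_norm_orderedProd (μ := μ) hTm hT hU hone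
  refine ⟨hsub.lim, hsub.tendsto_lim ⟨0, ?_⟩⟩
  rintro _ ⟨n, rfl⟩
  exact div_nonneg (integral_nonneg fun ω => log_nonneg (hone _ (orderedProd_mem hU n ω)))
    n.cast_nonneg

lemma HasLyapunovExponent.of_units_conj {γ : ℝ} (hTm : StronglyMeasurable T)
    (hT : ∀ s, ‖T s‖ ≤ K) (hU : ∀ s, T s ∈ U) (hone : ∀ P ∈ U, 1 ≤ ‖P‖) (M : Aˣ)
    (h : HasLyapunovExponent μ (fun s => M * T s * ↑M⁻¹) γ) : HasLyapunovExponent μ T γ := by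
  refine h.of_abs_sub_le (C := log (‖(M : A)‖ * ‖(↑M⁻¹ : A)‖)) fun n => ?_
  have hinteg := integrable_log_norm_orderedProd (μ := μ) hTm hT hU hone n
  have hbound (ω : Fin n → S) : ‖log ‖orderedProd (fun s => (M * T s * ↑M⁻¹ : A)) n ω‖ -
      log ‖orderedProd T n ω‖‖ ≤ log (‖(M : A)‖ * ‖(↑M⁻¹ : A)‖) := by
    rw [orderedProd_units_conj, norm_eq_abs]
    exact abs_log_norm_units_conj_sub_le M
      (norm_pos_iff.mp (one_pos.trans_le (hone _ (orderedProd_mem hU n ω))))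
  have hinteg' : Integrable (fun ω => log ‖orderedProd (fun s => (M * T s * ↑M⁻¹ : A)) n ω‖)
      (Measure.pi fun _ : Fin n => μ) := by
    refine (Integrable.of_bound ?_ _ (Eventually.of_forall hbound)).add hinteg |>.congr
      (Eventually.of_forall fun ω => sub_add_cancel _ _)
    exact ((stronglyMeasurable_orderedProd ((stronglyMeasurable_const.mul hTm).mul
      stronglyMeasurable_const) n).norm.measurable.log.sub
      (stronglyMeasurable_orderedProd hTm n).norm.measurable.log).aestronglyMeasurable
  rw [abs_sub_comm, ← integral_sub hinteg' hinteg]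
  simpa using norm_integral_le_of_norm_le_const (μ := Measure.pi fun _ : Fin n => μ)
    (Eventually.of_forall hbound)

lemma integrable_and_integral_orderedProd_succ {Φ : A → ℝ} (n : ℕ)
    (hinteg : Integrable (fun ω => Φ (orderedProd T (n + 1) ω))
      (Measure.pi fun _ : Fin (n + 1) => μ)) :
    Integrable (fun ω => ∫ s, Φ (T s * orderedProd T n ω) ∂μ) (Measure.pi fun _ : Fin n => μ) ∧
      ∫ ω, Φ (orderedProd T (n + 1) ω) ∂(Measure.pi fun _ : Fin (n + 1) => μ) =
        ∫ ω, ∫ s, Φ (T s * orderedProd T n ω) ∂μ ∂Measure.pi fun _ : Fin n => μ := by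
  have hmp := measurePreserving_piFinSuccAbove (fun _ : Fin (n + 1) => μ) 0
  let F (z : S × (Fin n → S)) : ℝ := Φ (T z.1 * orderedProd T n z.2)
  have hF (ω : Fin (n + 1) → S) : Φ (orderedProd T (n + 1) ω) =
      F (MeasurableEquiv.piFinSuccAbove (fun _ => S) 0 ω) := by
    rw [orderedProd_succ]; rfl
  simp only [hF] at hinteg ⊢
  have hFint : Integrable F (μ.prod (Measure.pi fun _ : Fin n => μ)) :=
    (hmp.integrable_comp_emb (MeasurableEquiv.measurableEmbedding _)).mp hinteg
  rw [hmp.integral_comp' (g := F)]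
  exact ⟨hFint.integral_prod_right, integral_prod_symm _ hFint⟩

lemma abs_integral_comp_orderedProd_sub_le {Φ : A → ℝ} {v err : ℝ}
    (hinteg : ∀ n, Integrable (fun ω => Φ (orderedProd T n ω)) (Measure.pi fun _ : Fin n => μ))
    (hU : ∀ s, T s ∈ U) (hdrift : ∀ P ∈ U, |∫ s, Φ (T s * P) ∂μ - (Φ P + v)| ≤ err) (n : ℕ) :
    |∫ ω, Φ (orderedProd T n ω) ∂(Measure.pi fun _ : Fin n => μ) - (Φ 1 + n * v)| ≤
      n * err := by
  induction n with
  | zero => simp [orderedProd_zero]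
  | succ n ih =>
    obtain ⟨hinteg', heq⟩ := integrable_and_integral_orderedProd_succ n (hinteg (n + 1))
    have hstep := abs_integral_sub_integral_le hinteg' ((hinteg n).add (integrable_const v))
      fun ω => hdrift _ (orderedProd_mem hU n ω)
    rw [integral_add' (hinteg n) (integrable_const v), integral_const, probReal_univ, one_smul]
      at hstep
    rw [heq]
    push_cast
    rw [abs_le] at *
    constructor <;> linarith [hstep.1, hstep.2, ih.1, ih.2]

variable {Φ : A → ℝ} {C : ℝ}

lemma integrable_comp_orderedProd (hTm : StronglyMeasurable T) (hT : ∀ s, ‖T s‖ ≤ K)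
    (hU : ∀ s, T s ∈ U) (hone : ∀ P ∈ U, 1 ≤ ‖P‖)
    (hΦ : ∀ n, Measurable fun ω : Fin n → S => Φ (orderedProd T n ω))
    (hΦU : ∀ P ∈ U, |Φ P - log ‖P‖| ≤ C) (n : ℕ) :
    Integrable (fun ω => Φ (orderedProd T n ω)) (Measure.pi fun _ : Fin n => μ) := by
  have hinteg := integrable_log_norm_orderedProd (μ := μ) hTm hT hU hone n
  refine (Integrable.of_bound ((hΦ n).aestronglyMeasurable.sub hinteg.aestronglyMeasurable) C
    (Eventually.of_forall fun ω => hΦU _ (orderedProd_mem hU n ω))).add hinteg |>.congr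
    (Eventually.of_forall fun ω => sub_add_cancel _ _)

lemma exists_hasLyapunovExponent_of_drift {v err : ℝ} (hTm : StronglyMeasurable T)
    (hT : ∀ s, ‖T s‖ ≤ K) (hU : ∀ s, T s ∈ U) (hone : ∀ P ∈ U, 1 ≤ ‖P‖)
    (hΦ : ∀ n, Measurable fun ω : Fin n → S => Φ (orderedProd T n ω))
    (hΦU : ∀ P ∈ U, |Φ P - log ‖P‖| ≤ C)
    (hdrift : ∀ P ∈ U, |∫ s, Φ (T s * P) ∂μ - (Φ P + v)| ≤ err) :
    ∃ γ, HasLyapunovExponent μ T γ ∧ |γ - v| ≤ err := by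
  obtain ⟨γ, hγ⟩ := exists_hasLyapunovExponent (μ := μ) hTm hT hU hone
  refine ⟨γ, hγ, ?_⟩
  have hinteg := integrable_comp_orderedProd (μ := μ) hTm hT hU hone hΦ hΦU
  have hmean (n : ℕ) (hn : 0 < n) :
      |(∫ ω, log ‖orderedProd T n ω‖ ∂(Measure.pi fun _ : Fin n => μ)) / n - v| ≤
        err + (C + |Φ 1|) / n := by
    have hlog := abs_integral_sub_integral_le (hinteg n)
      (integrable_log_norm_orderedProd (μ := μ) hTm hT hU hone n)
      fun ω => hΦU _ (orderedProd_mem hU n ω)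
    have hsum := abs_integral_comp_orderedProd_sub_le hinteg hU hdrift n
    have hn : (0 : ℝ) < n := mod_cast hn
    rw [← mul_le_mul_iff_of_pos_right hn, ← abs_of_pos hn, ← abs_mul, abs_of_pos hn]
    field_simp
    have := abs_le.mp hlog; have := abs_le.mp hsum
    rw [abs_le]
    constructor <;> linarith [neg_abs_le (Φ 1), le_abs_self (Φ 1)]
  refine le_of_tendsto_of_tendsto (hγ.sub_const v).abs ?_
    ((eventually_gt_atTop 0).mono hmean)
  simpa using tendsto_const_nhds.add (tendsto_const_div_atTop_nhds_zero_nat (C + |Φ 1|))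

end LyapunovExponent

local notation "M₂" => Matrix (Fin 2) (Fin 2) ℝ
open scoped ComplexConjugate
attribute [local instance] Matrix.frobeniusNormedRing Matrix.frobeniusNormedAlgebra

section ComplexCoordinates

/-- The complex-linear coefficient of a real matrix: under `ℝ² ≃ ℂ` the matrix `P` acts as
`z ↦ linPart P * z + antilinPart P * conj z`. -/
noncomputable def linPart : M₂ →L[ℝ] ℂ where
  toFun P := ⟨(P 0 0 + P 1 1) / 2, (P 1 0 - P 0 1) / 2⟩
  map_add' P Q := by apply Complex.ext <;> simp <;> ring
  map_smul' r P := by apply Complex.ext <;> simp <;> ring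
  cont := by
    simp only [Complex.mk_eq_add_mul_I]
    fun_prop

/-- The antilinear coefficient of a real matrix, see `linPart`. -/
noncomputable def antilinPart : M₂ →L[ℝ] ℂ where
  toFun P := ⟨(P 0 0 - P 1 1) / 2, (P 1 0 + P 0 1) / 2⟩
  map_add' P Q := by apply Complex.ext <;> simp <;> ring
  map_smul' r P := by apply Complex.ext <;> simp <;> ring
  cont := by
    simp only [Complex.mk_eq_add_mul_I]
    fun_prop

lemma linPart_apply (P : M₂) : linPart P = ⟨(P 0 0 + P 1 1) / 2, (P 1 0 - P 0 1) / 2⟩ := rfl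

lemma antilinPart_apply (P : M₂) :
    antilinPart P = ⟨(P 0 0 - P 1 1) / 2, (P 1 0 + P 0 1) / 2⟩ := rfl

lemma linPart_mul (P Q : M₂) :
    linPart (P * Q) = linPart P * linPart Q + antilinPart P * conj (antilinPart Q) := by
  apply Complex.ext <;>
    simp [linPart_apply, antilinPart_apply, Matrix.mul_apply, Fin.sum_univ_two] <;> ring

lemma antilinPart_mul (P Q : M₂) :
    antilinPart (P * Q) = linPart P * antilinPart Q + antilinPart P * conj (linPart Q) := by
  apply Complex.ext <;>
    simp [linPart_apply, antilinPart_apply, Matrix.mul_apply, Fin.sum_univ_two] <;> ring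

lemma norm_linPart_sq_sub (P : M₂) : ‖linPart P‖ ^ 2 - ‖antilinPart P‖ ^ 2 = P.det := by
  rw [← Complex.normSq_eq_norm_sq, ← Complex.normSq_eq_norm_sq, Matrix.det_fin_two]
  simp only [linPart_apply, antilinPart_apply, Complex.normSq_apply]
  ring

lemma matNorm_eq_norm (P : M₂) : matNorm P = ‖P‖ := by
  rw [Matrix.frobenius_norm_def, matNorm, Real.sqrt_eq_rpow]
  simp

lemma norm_sq_eq (P : M₂) : ‖P‖ ^ 2 = 2 * (‖linPart P‖ ^ 2 + ‖antilinPart P‖ ^ 2) := by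
  rw [← matNorm_eq_norm, matNorm, Real.sq_sqrt (by positivity), ← Complex.normSq_eq_norm_sq,
    ← Complex.normSq_eq_norm_sq]
  simp only [linPart_apply, antilinPart_apply, Complex.normSq_apply, Fin.sum_univ_two]
  ring

lemma norm_linPart_le (P : M₂) : ‖linPart P‖ ≤ ‖P‖ := by
  apply le_of_sq_le_sq _ (norm_nonneg _)
  nlinarith [norm_sq_eq P, sq_nonneg ‖linPart P‖, sq_nonneg ‖antilinPart P‖]

variable {P : M₂}

lemma one_le_norm_linPart (hP : P.det = 1) : 1 ≤ ‖linPart P‖ := by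
  nlinarith [norm_linPart_sq_sub P, norm_nonneg (linPart P), sq_nonneg ‖antilinPart P‖]

lemma linPart_ne_zero (hP : P.det = 1) : linPart P ≠ 0 :=
  norm_pos_iff.mp (one_pos.trans_le (one_le_norm_linPart hP))

lemma norm_antilinPart_le_norm_linPart (hP : P.det = 1) : ‖antilinPart P‖ ≤ ‖linPart P‖ := by
  apply le_of_sq_le_sq _ (norm_nonneg _)
  linarith [norm_linPart_sq_sub P]

lemma norm_le_two_mul_norm_linPart (hP : P.det = 1) : ‖P‖ ≤ 2 * ‖linPart P‖ := by
  apply le_of_sq_le_sq _ (by positivity)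
  nlinarith [norm_sq_eq P, norm_linPart_sq_sub P]

lemma one_le_norm_of_det_eq_one (hP : P.det = 1) : 1 ≤ ‖P‖ :=
  (one_le_norm_linPart hP).trans (norm_linPart_le P)

end ComplexCoordinates

section MobiusDynamics

/-- The denominator of the Möbius map `mobius a b`. -/
noncomputable def mobiusDenom (a b ζ : ℂ) : ℂ := conj a + conj b * ζ

/-- The Möbius map through which a real matrix with complex coordinates `a`, `b` acts on the unit
disc. -/
noncomputable def mobius (a b ζ : ℂ) : ℂ := (a * ζ + b) / mobiusDenom a b ζ

/-- The increment of `correctedLog α β` under left multiplication by a matrix with complex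
coordinates `a`, `b`, at a matrix with disc coordinate `ζ`. -/
noncomputable def stepIncrement (α β a b ζ : ℂ) : ℝ :=
  log ‖mobiusDenom a b ζ‖ + (α * (mobius a b ζ - ζ) + β * (mobius a b ζ ^ 2 - ζ ^ 2)).re

/-- The point of the closed unit disc on which a matrix of determinant one is projected. -/
noncomputable def discCoord (P : M₂) : ℂ := antilinPart P / conj (linPart P)

/-- The logarithm of the complex-linear coefficient, corrected by a bounded function
`Re (α ζ + β ζ²)` of the disc coordinate `ζ`. -/
noncomputable def correctedLog (α β : ℂ) (P : M₂) : ℝ :=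
  log ‖linPart P‖ + (α * discCoord P + β * discCoord P ^ 2).re

variable {P Q : M₂} {α β : ℂ}

lemma norm_discCoord_le_one (hP : P.det = 1) : ‖discCoord P‖ ≤ 1 := by
  rw [discCoord, norm_div, RCLike.norm_conj,
    div_le_one (one_pos.trans_le (one_le_norm_linPart hP))]
  exact norm_antilinPart_le_norm_linPart hP

lemma conj_linPart_mul (P : M₂) (hQ : Q.det = 1) : conj (linPart (P * Q)) =
    conj (linPart Q) * mobiusDenom (linPart P) (antilinPart P) (discCoord Q) := by
  have hQ0 : conj (linPart Q) ≠ 0 := (map_ne_zero _).mpr (linPart_ne_zero hQ)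
  rw [linPart_mul, mobiusDenom, discCoord]
  simp only [map_add, map_mul, Complex.conj_conj]
  field_simp

lemma mobiusDenom_ne_zero (hP : P.det = 1) (hQ : Q.det = 1) :
    mobiusDenom (linPart P) (antilinPart P) (discCoord Q) ≠ 0 := by
  have hPQ : (P * Q).det = 1 := by rw [Matrix.det_mul, hP, hQ, one_mul]
  exact right_ne_zero_of_mul (conj_linPart_mul P hQ ▸ (map_ne_zero _).mpr (linPart_ne_zero hPQ))

lemma discCoord_mul (hP : P.det = 1) (hQ : Q.det = 1) :
    discCoord (P * Q) = mobius (linPart P) (antilinPart P) (discCoord Q) := by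
  have hQ0 : conj (linPart Q) ≠ 0 := (map_ne_zero _).mpr (linPart_ne_zero hQ)
  have hd := mobiusDenom_ne_zero hP hQ
  rw [discCoord, conj_linPart_mul P hQ, mobius, antilinPart_mul,
    div_eq_div_iff (mul_ne_zero hQ0 hd) hd, discCoord]
  field_simp

lemma correctedLog_mul (α β : ℂ) (hP : P.det = 1) (hQ : Q.det = 1) :
    correctedLog α β (P * Q) =
      correctedLog α β Q + stepIncrement α β (linPart P) (antilinPart P) (discCoord Q) := by
  have hnorm : ‖linPart (P * Q)‖ =
      ‖linPart Q‖ * ‖mobiusDenom (linPart P) (antilinPart P) (discCoord Q)‖ := by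
    rw [← RCLike.norm_conj, conj_linPart_mul P hQ, norm_mul, RCLike.norm_conj]
  rw [correctedLog, correctedLog, stepIncrement, hnorm, discCoord_mul hP hQ,
    log_mul (norm_ne_zero_iff.mpr (linPart_ne_zero hQ))
      (norm_ne_zero_iff.mpr (mobiusDenom_ne_zero hP hQ))]
  simp only [mul_sub, Complex.add_re, Complex.sub_re]
  ring

lemma norm_corrector_le {ζ : ℂ} (hζ : ‖ζ‖ ≤ 1) : ‖α * ζ + β * ζ ^ 2‖ ≤ ‖α‖ + ‖β‖ := by
  refine (norm_add_le _ _).trans (add_le_add ?_ ?_)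
  · simpa using mul_le_mul_of_nonneg_left hζ (norm_nonneg α)
  · simpa using mul_le_mul_of_nonneg_left (pow_le_one₀ (n := 2) (norm_nonneg ζ) hζ) (norm_nonneg β)

lemma abs_correctedLog_sub_log_norm_le (hP : P.det = 1) :
    |correctedLog α β P - log ‖P‖| ≤ ‖α‖ + ‖β‖ + log 2 := by
  have hcorr := (Complex.abs_re_le_norm _).trans
    (norm_corrector_le (α := α) (β := β) (norm_discCoord_le_one hP))
  have hpos := one_pos.trans_le (one_le_norm_linPart hP)
  have hle := log_le_log hpos (norm_linPart_le P)
  have hge := log_le_log (one_pos.trans_le (one_le_norm_of_det_eq_one hP))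
    (norm_le_two_mul_norm_linPart hP)
  rw [log_mul two_ne_zero hpos.ne'] at hge
  rw [correctedLog, abs_le]
  constructor <;> linarith [abs_le.mp hcorr, log_pos one_lt_two]

lemma measurable_correctedLog {X : Type*} [MeasurableSpace X] {f : X → M₂}
    (hf : StronglyMeasurable f) (α β : ℂ) : Measurable fun x => correctedLog α β (f x) := by
  have hlin := (linPart.continuous.comp_stronglyMeasurable hf).measurable
  have hdisc : Measurable fun x => discCoord (f x) :=
    (antilinPart.continuous.comp_stronglyMeasurable hf).measurable.div
      (Complex.continuous_conj.measurable.comp hlin)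
  exact hlin.norm.log.add (Complex.measurable_re.comp
    ((hdisc.const_mul α).add ((hdisc.pow_const 2).const_mul β)))

end MobiusDynamics

section Drift

variable {S : Type*} [MeasurableSpace S] {μ : Measure S} [IsProbabilityMeasure μ] {T : S → M₂}
  {K v err : ℝ} {α β : ℂ}

lemma integral_correctedLog_mul (hTm : StronglyMeasurable T) (hT : ∀ s, ‖T s‖ ≤ K)
    (hdet : ∀ s, (T s).det = 1) {P : M₂} (hP : P.det = 1) :
    ∫ s, correctedLog α β (T s * P) ∂μ = correctedLog α β P +
      ∫ s, stepIncrement α β (linPart (T s)) (antilinPart (T s)) (discCoord P) ∂μ := by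
  have hdet' (s : S) : (T s * P).det = 1 := by rw [Matrix.det_mul, hdet, hP, one_mul]
  have hinteg : Integrable (fun s => correctedLog α β (T s * P)) μ := by
    have hmeas := measurable_correctedLog (hTm.mul (stronglyMeasurable_const (b := P))) α β
    refine .of_bound hmeas.aestronglyMeasurable
      (log (K * ‖P‖) + (‖α‖ + ‖β‖ + log 2)) (Eventually.of_forall fun s => ?_)
    have hlog := log_le_log (one_pos.trans_le (one_le_norm_of_det_eq_one (hdet' s)))
      ((norm_mul_le _ _).trans (mul_le_mul_of_nonneg_right (hT s) (norm_nonneg P)))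
    have hcorr := abs_le.mp (abs_correctedLog_sub_log_norm_le (α := α) (β := β) (hdet' s))
    rw [norm_eq_abs, abs_le]
    constructor <;> linarith [log_nonneg (one_le_norm_of_det_eq_one (hdet' s))]
  simp only [correctedLog_mul α β (hdet _) hP] at hinteg ⊢
  have hstep : Integrable
      (fun s => stepIncrement α β (linPart (T s)) (antilinPart (T s)) (discCoord P)) μ :=
    (hinteg.sub (integrable_const (correctedLog α β P))).congr
      (Eventually.of_forall fun s => add_sub_cancel_left _ _)
  rw [integral_add (integrable_const _) hstep, integral_const, probReal_univ, one_smul]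

lemma exists_hasLyapunovExponent_of_stepIncrement (hTm : StronglyMeasurable T)
    (hT : ∀ s, ‖T s‖ ≤ K) (hdet : ∀ s, (T s).det = 1)
    (hstep : ∀ ζ : ℂ, ‖ζ‖ ≤ 1 →
      |∫ s, stepIncrement α β (linPart (T s)) (antilinPart (T s)) ζ ∂μ - v| ≤ err) :
    ∃ γ, HasLyapunovExponent μ T γ ∧ |γ - v| ≤ err := by
  refine exists_hasLyapunovExponent_of_drift
    (U := MonoidHom.mker (Matrix.detMonoidHom : M₂ →* ℝ)) hTm hT hdet
    (fun P hP => one_le_norm_of_det_eq_one hP)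
    (fun n => measurable_correctedLog (stronglyMeasurable_orderedProd hTm n) α β)
    (fun P hP => abs_correctedLog_sub_log_norm_le hP) fun P hP => ?_
  rw [integral_correctedLog_mul hTm hT hdet hP, add_sub_add_left_eq_sub]
  exact hstep _ (norm_discCoord_le_one hP)

end Drift

section SecondOrder

lemma abs_log_norm_one_add_sub_le {h : ℂ} (hh : ‖h‖ ≤ 1 / 2) :
    |log ‖1 + h‖ - (h - h ^ 2 / 2).re| ≤ ‖h‖ ^ 3 := by
  have hpoly : Complex.logTaylor 3 h = h - h ^ 2 / 2 := by
    simp only [Complex.logTaylor, Finset.sum_range_succ, Finset.sum_range_zero]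
    push_cast
    ring
  have htaylor : ‖Complex.log (1 + h) - (h - h ^ 2 / 2)‖ ≤ ‖h‖ ^ 3 * (1 - ‖h‖)⁻¹ / 3 :=
    hpoly ▸ (Complex.norm_log_sub_logTaylor_le 2 (by linarith)).trans_eq (by norm_num)
  have hinv : (1 - ‖h‖)⁻¹ ≤ 2 := by
    rw [inv_le_comm₀ (by linarith) (by norm_num)]
    linarith
  rw [← Complex.log_re, ← Complex.sub_re]
  refine (Complex.abs_re_le_norm _).trans (htaylor.trans ?_)
  nlinarith [pow_nonneg (norm_nonneg h) 3]

/-- The first-order part of the increment of `correctedLog α β` at `ζ`, in the noise `a`, `b` of the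
random rotation `w (z + a z + b conj z)`. -/
noncomputable def linearIncrement (α β w a b ζ : ℂ) : ℂ :=
  conj a + conj b * ζ +
    (α * w ^ 2 + 2 * β * w ^ 4 * ζ) * ((a - conj a) * ζ + b - conj b * ζ ^ 2)

variable {α β w a b ζ : ℂ} {τ y δ B : ℝ}

lemma norm_conj_add_conj_mul_le (hζ : ‖ζ‖ ≤ 1) (ha : ‖a‖ ≤ y) (hb : ‖b‖ ≤ y) :
    ‖conj a + conj b * ζ‖ ≤ 2 * y := by
  have hb' : ‖conj b * ζ‖ ≤ y * 1 := by
    rw [norm_mul, RCLike.norm_conj]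
    gcongr
    exact (norm_nonneg b).trans hb
  linarith [norm_add_le (conj a) (conj b * ζ), RCLike.norm_conj a]

lemma norm_mobiusShift_le (hζ : ‖ζ‖ ≤ 1) (ha : ‖a‖ ≤ y) (hb : ‖b‖ ≤ y) :
    ‖(a - conj a) * ζ + b - conj b * ζ ^ 2‖ ≤ 4 * y := by
  have hy : 0 ≤ y := (norm_nonneg a).trans ha
  have h₁ : ‖(a - conj a) * ζ‖ ≤ (y + y) * 1 := by
    rw [norm_mul]
    gcongr
    exact (norm_sub_le _ _).trans (by rw [RCLike.norm_conj]; gcongr)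
  have h₂ : ‖conj b * ζ ^ 2‖ ≤ y * 1 := by
    rw [norm_mul, norm_pow, RCLike.norm_conj]
    gcongr
    exact pow_le_one₀ (norm_nonneg _) hζ
  linarith [norm_sub_le ((a - conj a) * ζ + b) (conj b * ζ ^ 2), norm_add_le ((a - conj a) * ζ) b]

lemma mobiusDenom_rotation (w a b ζ : ℂ) :
    mobiusDenom (w * (1 + a)) (w * b) ζ = conj w * (1 + (conj a + conj b * ζ)) := by
  simp only [mobiusDenom, map_mul, map_add, map_one]
  ring

lemma norm_one_add_ge {h : ℂ} (hh : ‖h‖ ≤ 1 / 2) : 1 / 2 ≤ ‖1 + h‖ := by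
  have := norm_sub_norm_le (1 : ℂ) (-h)
  rw [sub_neg_eq_add, norm_neg, norm_one] at this
  linarith

lemma mobius_rotation_sub (hw : ‖w‖ = 1) (h0 : 1 + (conj a + conj b * ζ) ≠ 0) :
    mobius (w * (1 + a)) (w * b) ζ - w ^ 2 * (ζ + ((a - conj a) * ζ + b - conj b * ζ ^ 2)) =
      -(w ^ 2 * ((conj a + conj b * ζ) * ((a - conj a) * ζ + b - conj b * ζ ^ 2))) /
        (1 + (conj a + conj b * ζ)) := by
  have hw0 : conj w ≠ 0 := (map_ne_zero _).mpr (norm_ne_zero_iff.mp (hw ▸ one_ne_zero))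
  have hww : w * conj w = 1 := by rw [Complex.mul_conj, Complex.normSq_eq_norm_sq, hw]; simp
  rw [mobius, mobiusDenom_rotation, div_sub' (mul_ne_zero hw0 h0),
    div_eq_div_iff (mul_ne_zero hw0 h0) h0]
  linear_combination (1 + (conj a + conj b * ζ)) * w * (-(1 + a) * ζ - b) * hww

lemma norm_mobius_rotation_sub_le (hw : ‖w‖ = 1) (hζ : ‖ζ‖ ≤ 1) (hy : y ≤ 1 / 4) (ha : ‖a‖ ≤ y)
    (hb : ‖b‖ ≤ y) :
    ‖mobius (w * (1 + a)) (w * b) ζ - w ^ 2 * (ζ + ((a - conj a) * ζ + b - conj b * ζ ^ 2))‖ ≤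
      16 * y ^ 2 := by
  have hh := norm_conj_add_conj_mul_le hζ ha hb
  have hk := norm_mobiusShift_le hζ ha hb
  have hge := norm_one_add_ge (hh.trans (by linarith : 2 * y ≤ 1 / 2))
  rw [mobius_rotation_sub hw (norm_pos_iff.mp (by linarith)), norm_div, norm_neg, norm_mul,
    norm_pow, hw, one_pow, one_mul, norm_mul, div_le_iff₀ (by linarith)]
  calc ‖conj a + conj b * ζ‖ * ‖(a - conj a) * ζ + b - conj b * ζ ^ 2‖
      ≤ (2 * y) * (4 * y) := by gcongr; linarith [norm_nonneg a]
    _ = 16 * y ^ 2 * (1 / 2) := by ring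
    _ ≤ _ := by gcongr

lemma norm_sq_sub_le {m k : ℂ} (hw : ‖w‖ = 1) (hζ : ‖ζ‖ ≤ 1) (hy : y ≤ 1 / 4) (hk : ‖k‖ ≤ 4 * y)
    (hm : ‖m - w ^ 2 * (ζ + k)‖ ≤ 16 * y ^ 2) :
    ‖m ^ 2 - w ^ 4 * (ζ ^ 2 + 2 * ζ * k)‖ ≤ 96 * y ^ 2 := by
  have hy0 : 0 ≤ y := by linarith [norm_nonneg k]
  set e := m - w ^ 2 * (ζ + k)
  have hsplit : m ^ 2 - w ^ 4 * (ζ ^ 2 + 2 * ζ * k) =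
      e * (2 * (w ^ 2 * (ζ + k)) + e) + w ^ 4 * k ^ 2 := by
    simp only [e]; ring
  have hfac : ‖2 * (w ^ 2 * (ζ + k)) + e‖ ≤ 5 := by
    have h₁ := norm_add_le (2 * (w ^ 2 * (ζ + k))) e
    have h₂ := norm_add_le ζ k
    rw [norm_mul, norm_mul, norm_pow, hw, one_pow, one_mul, Complex.norm_two] at h₁
    nlinarith
  calc _ ≤ ‖e‖ * ‖2 * (w ^ 2 * (ζ + k)) + e‖ + ‖k‖ ^ 2 := by
        rw [hsplit]
        refine (norm_add_le _ _).trans_eq ?_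
        rw [norm_mul, norm_mul, norm_pow, norm_pow, hw, one_pow, one_mul]
    _ ≤ 16 * y ^ 2 * 5 + (4 * y) ^ 2 := by gcongr
    _ = 96 * y ^ 2 := by ring

lemma abs_log_norm_mobiusDenom_sub_le (hw : ‖w‖ = 1) (hζ : ‖ζ‖ ≤ 1) (hy : y ≤ 1 / 4)
    (ha : ‖a‖ ≤ y) (hb : ‖b‖ ≤ y) (hτ : |τ| ≤ y) (haτ : ‖a - Complex.I * τ‖ ≤ δ)
    (hbτ : ‖b - Complex.I * τ‖ ≤ δ) :
    |log ‖mobiusDenom (w * (1 + a)) (w * b) ζ‖ -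
      (conj a + conj b * ζ + τ ^ 2 / 2 * (1 + ζ) ^ 2).re| ≤ 8 * y ^ 3 + 4 * y * δ := by
  set h := conj a + conj b * ζ
  set q : ℂ := conj (Complex.I * τ) + conj (Complex.I * τ) * ζ
  have hh : ‖h‖ ≤ 2 * y := norm_conj_add_conj_mul_le hζ ha hb
  have hq : ‖q‖ ≤ 2 * y := by
    have : ‖Complex.I * τ‖ ≤ y := by simpa using hτ
    exact norm_conj_add_conj_mul_le hζ this this
  have hdiff : ‖h - q‖ ≤ 2 * δ := by
    convert norm_conj_add_conj_mul_le hζ haτ hbτ using 2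
    simp only [h, q, map_sub]; ring
  have hqsq : (τ : ℂ) ^ 2 * (1 + ζ) ^ 2 = -q ^ 2 := by
    simp only [q, map_mul, Complex.conj_I, Complex.conj_ofReal]
    linear_combination (τ : ℂ) ^ 2 * (1 + ζ) ^ 2 * Complex.I_sq
  have hlog := abs_log_norm_one_add_sub_le (h := h) (by linarith)
  have hquad : |((h - q) * (h + q) / 2).re| ≤ 4 * y * δ := by
    refine (Complex.abs_re_le_norm _).trans ?_
    rw [norm_div, norm_mul, Complex.norm_two]
    nlinarith [norm_add_le h q, norm_nonneg (h - q), norm_nonneg (h + q)]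
  have hcube : ‖h‖ ^ 3 ≤ 8 * y ^ 3 := by
    calc ‖h‖ ^ 3 ≤ (2 * y) ^ 3 := by gcongr
      _ = 8 * y ^ 3 := by ring
  have hmain : h + τ ^ 2 / 2 * (1 + ζ) ^ 2 = h - h ^ 2 / 2 + (h - q) * (h + q) / 2 := by
    linear_combination hqsq / 2
  rw [mobiusDenom_rotation, norm_mul, RCLike.norm_conj, hw, one_mul, hmain, Complex.add_re]
  rw [abs_le] at *
  constructor <;> linarith

lemma abs_stepIncrement_rotation_sub_le (hw : ‖w‖ = 1) (hα : ‖α‖ ≤ B) (hβ : ‖β‖ ≤ B)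
    (hζ : ‖ζ‖ ≤ 1) (hy : y ≤ 1 / 4) (ha : ‖a‖ ≤ y) (hb : ‖b‖ ≤ y) (hτ : |τ| ≤ y)
    (haτ : ‖a - Complex.I * τ‖ ≤ δ) (hbτ : ‖b - Complex.I * τ‖ ≤ δ) :
    |stepIncrement α β (w * (1 + a)) (w * b) ζ -
      (α * (w ^ 2 - 1) * ζ + β * (w ^ 4 - 1) * ζ ^ 2 + τ ^ 2 / 2 * (1 + ζ) ^ 2 +
        linearIncrement α β w a b ζ).re| ≤ 8 * y ^ 3 + 4 * y * δ + 112 * B * y ^ 2 := by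
  have hlog := abs_log_norm_mobiusDenom_sub_le hw hζ hy ha hb hτ haτ hbτ
  have hmob := norm_mobius_rotation_sub_le hw hζ hy ha hb
  have hsq := norm_sq_sub_le hw hζ hy (norm_mobiusShift_le hζ ha hb) hmob
  set m := mobius (w * (1 + a)) (w * b) ζ
  set k := (a - conj a) * ζ + b - conj b * ζ ^ 2 with hk
  set e₁ := m - w ^ 2 * (ζ + k) with he₁
  set e₂ := m ^ 2 - w ^ 4 * (ζ ^ 2 + 2 * ζ * k) with he₂
  have hcorr : |(α * e₁ + β * e₂).re| ≤ 112 * B * y ^ 2 := by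
    have hB : 0 ≤ B := (norm_nonneg α).trans hα
    calc _ ≤ ‖α‖ * ‖e₁‖ + ‖β‖ * ‖e₂‖ := by
          rw [← norm_mul, ← norm_mul]
          exact (Complex.abs_re_le_norm _).trans (norm_add_le _ _)
      _ ≤ B * (16 * y ^ 2) + B * (96 * y ^ 2) := by gcongr
      _ = 112 * B * y ^ 2 := by ring
  have hexp : α * (m - ζ) + β * (m ^ 2 - ζ ^ 2) = α * (w ^ 2 - 1) * ζ + β * (w ^ 4 - 1) * ζ ^ 2 +
      (linearIncrement α β w a b ζ - (conj a + conj b * ζ)) + (α * e₁ + β * e₂) := by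
    rw [linearIncrement, ← hk, he₁, he₂]; ring
  rw [stepIncrement, hexp]
  simp only [Complex.add_re, Complex.sub_re] at hlog hcorr ⊢
  rw [abs_le] at *
  constructor <;> linarith

end SecondOrder

section MeanIncrement

variable {S : Type*} [MeasurableSpace S] {μ : Measure S} {α β w ζ : ℂ} {a b : S → ℂ} {τ : S → ℝ}
  {y δ B m : ℝ}

lemma measurable_stepIncrement (ha : Measurable a) (hb : Measurable b) (α β ζ : ℂ) :
    Measurable fun s => stepIncrement α β (a s) (b s) ζ := by
  have hden : Measurable fun s => mobiusDenom (a s) (b s) ζ :=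
    (Complex.continuous_conj.measurable.comp ha).add
      ((Complex.continuous_conj.measurable.comp hb).mul_const ζ)
  have hmob : Measurable fun s => mobius (a s) (b s) ζ := ((ha.mul_const ζ).add hb).div hden
  exact hden.norm.log.add (Complex.measurable_re.comp
    (((hmob.sub_const ζ).const_mul α).add (((hmob.pow_const 2).sub_const (ζ ^ 2)).const_mul β)))

lemma integrable_conj (ha : Integrable a μ) : Integrable (fun s => conj (a s)) μ :=
  Complex.conjCLE.toContinuousLinearMap.integrable_comp ha

lemma integrable_linearIncrement (ha : Integrable a μ) (hb : Integrable b μ) (α β w ζ : ℂ) :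
    Integrable (fun s => linearIncrement α β w (a s) (b s) ζ) μ :=
  ((integrable_conj ha).add ((integrable_conj hb).mul_const ζ)).add
    (((((ha.sub (integrable_conj ha)).mul_const ζ).add hb).sub
      ((integrable_conj hb).mul_const _)).const_mul _)

lemma integral_linearIncrement (ha : Integrable a μ) (hb : Integrable b μ) (α β w ζ : ℂ) :
    ∫ s, linearIncrement α β w (a s) (b s) ζ ∂μ =
      linearIncrement α β w (∫ s, a s ∂μ) (∫ s, b s ∂μ) ζ := by
  have ha' := integrable_conj ha
  have hb' := integrable_conj hb
  have hfst : Integrable (fun s => conj (a s) + conj (b s) * ζ) μ := ha'.add (hb'.mul_const ζ)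
  have hdiff : Integrable (fun s => (a s - conj (a s)) * ζ) μ := (ha.sub ha').mul_const ζ
  have hsum : Integrable (fun s => (a s - conj (a s)) * ζ + b s) μ := hdiff.add hb
  have hsnd : Integrable (fun s => (a s - conj (a s)) * ζ + b s - conj (b s) * ζ ^ 2) μ :=
    hsum.sub (hb'.mul_const (ζ ^ 2))
  simp only [linearIncrement]
  rw [integral_add hfst (hsnd.const_mul _), integral_const_mul,
    integral_sub hsum (hb'.mul_const _), integral_add hdiff hb, integral_add ha' (hb'.mul_const ζ),
    integral_mul_const, integral_mul_const, integral_mul_const, integral_sub ha ha',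
    integral_conj, integral_conj]

lemma norm_linearIncrement_le {a b : ℂ} (hw : ‖w‖ = 1) (hα : ‖α‖ ≤ B) (hβ : ‖β‖ ≤ B)
    (hζ : ‖ζ‖ ≤ 1) (ha : ‖a‖ ≤ m) (hb : ‖b‖ ≤ m) :
    ‖linearIncrement α β w a b ζ‖ ≤ (2 + 12 * B) * m := by
  have hB : 0 ≤ B := (norm_nonneg α).trans hα
  have hcoef : ‖α * w ^ 2 + 2 * β * w ^ 4 * ζ‖ ≤ 3 * B := by
    refine (norm_add_le _ _).trans ?_
    simp only [norm_mul, norm_pow, hw, one_pow, mul_one, Complex.norm_two]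
    nlinarith [norm_nonneg β]
  calc _ ≤ 2 * m + 3 * B * (4 * m) := by
        refine (norm_add_le _ _).trans (add_le_add (norm_conj_add_conj_mul_le hζ ha hb) ?_)
        rw [norm_mul]
        gcongr
        exact norm_mobiusShift_le hζ ha hb
    _ = (2 + 12 * B) * m := by ring

variable [IsProbabilityMeasure μ]

/- `c₁ ζ + c₂ ζ²` is the drift of the correctors under the rotation, and the conditions on `c₁` and
`c₂` say that it cancels the part of the mean of `τ ^ 2 / 2 * (1 + ζ) ^ 2` that depends on `ζ`. -/
lemma integral_drift_add_linearIncrement {c₁ c₂ : ℂ} (hc₁ : c₁ = -(∫ s, τ s ^ 2 ∂μ : ℝ))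
    (hc₂ : 2 * c₂ = -(∫ s, τ s ^ 2 ∂μ : ℝ)) (ha : Integrable a μ) (hb : Integrable b μ)
    (hτ : Integrable (fun s => τ s ^ 2) μ) (α β w ζ : ℂ) :
    Integrable (fun s => c₁ * ζ + c₂ * ζ ^ 2 + τ s ^ 2 / 2 * (1 + ζ) ^ 2 +
      linearIncrement α β w (a s) (b s) ζ) μ ∧
    ∫ s, (c₁ * ζ + c₂ * ζ ^ 2 + τ s ^ 2 / 2 * (1 + ζ) ^ 2 +
      linearIncrement α β w (a s) (b s) ζ) ∂μ =
        ((∫ s, τ s ^ 2 ∂μ) / 2 : ℝ) + linearIncrement α β w (∫ s, a s ∂μ) (∫ s, b s ∂μ) ζ := by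
  have hlin := integrable_linearIncrement ha hb α β w ζ
  have hquad : Integrable (fun s => (τ s ^ 2 / 2 * (1 + ζ) ^ 2 : ℂ)) μ := by
    simpa using ((hτ.ofReal (𝕜 := ℂ)).div_const 2).mul_const ((1 + ζ) ^ 2)
  have hsum : Integrable (fun s => c₁ * ζ + c₂ * ζ ^ 2 + τ s ^ 2 / 2 * (1 + ζ) ^ 2) μ :=
    (integrable_const _).add hquad
  have hV : ∫ s, (τ s : ℂ) ^ 2 ∂μ = (∫ s, τ s ^ 2 ∂μ : ℝ) := by
    simp only [← Complex.ofReal_pow, integral_complex_ofReal]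
  refine ⟨hsum.add hlin, ?_⟩
  rw [integral_add hsum hlin, integral_linearIncrement ha hb,
    integral_add (integrable_const _) hquad, integral_mul_const, integral_div, hV,
    integral_const, probReal_univ, one_smul]
  push_cast
  linear_combination ζ * hc₁ + ζ ^ 2 / 2 * hc₂

lemma abs_integral_stepIncrement_rotation_sub_le (hw : ‖w‖ = 1) (hαB : ‖α‖ ≤ B) (hβB : ‖β‖ ≤ B)
    (hα : α * (w ^ 2 - 1) = -(∫ s, τ s ^ 2 ∂μ : ℝ))
    (hβ : 2 * (β * (w ^ 4 - 1)) = -(∫ s, τ s ^ 2 ∂μ : ℝ))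
    (ham : StronglyMeasurable a) (hbm : StronglyMeasurable b) (hτm : StronglyMeasurable τ)
    (hy : y ≤ 1 / 4) (ha : ∀ s, ‖a s‖ ≤ y) (hb : ∀ s, ‖b s‖ ≤ y) (hτ : ∀ s, |τ s| ≤ y)
    (haτ : ∀ s, ‖a s - Complex.I * τ s‖ ≤ δ) (hbτ : ∀ s, ‖b s - Complex.I * τ s‖ ≤ δ)
    (hma : ‖∫ s, a s ∂μ‖ ≤ m) (hmb : ‖∫ s, b s ∂μ‖ ≤ m) (hζ : ‖ζ‖ ≤ 1) :
    |∫ s, stepIncrement α β (w * (1 + a s)) (w * b s) ζ ∂μ - (∫ s, τ s ^ 2 ∂μ) / 2| ≤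
      8 * y ^ 3 + 4 * y * δ + 112 * B * y ^ 2 + (2 + 12 * B) * m := by
  have hai : Integrable a μ := .of_bound ham.aestronglyMeasurable y (Eventually.of_forall ha)
  have hbi : Integrable b μ := .of_bound hbm.aestronglyMeasurable y (Eventually.of_forall hb)
  have hτi : Integrable (fun s => τ s ^ 2) μ :=
    .of_bound (hτm.pow 2).aestronglyMeasurable (y ^ 2) (Eventually.of_forall fun s => by
      rw [norm_pow]; exact pow_le_pow_left₀ (norm_nonneg _) (hτ s) 2)
  obtain ⟨hGi, hG⟩ := integral_drift_add_linearIncrement hα hβ hai hbi hτi α β w ζ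
  have hstep (s : S) :=
    abs_stepIncrement_rotation_sub_le hw hαB hβB hζ hy (ha s) (hb s) (hτ s) (haτ s) (hbτ s)
  have hmeas := measurable_stepIncrement ((ham.measurable.const_add 1).const_mul w)
    (hbm.measurable.const_mul w) α β ζ
  have hinteg : Integrable (fun s => stepIncrement α β (w * (1 + a s)) (w * b s) ζ) μ :=
    ((Integrable.of_bound (hmeas.aestronglyMeasurable.sub hGi.re.aestronglyMeasurable) _
      (Eventually.of_forall hstep)).add hGi.re).congr
      (Eventually.of_forall fun s => sub_add_cancel _ _)
  have hmean := abs_integral_sub_integral_le hinteg hGi.re hstep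
  have hrem := (Complex.abs_re_le_norm _).trans (norm_linearIncrement_le hw hαB hβB hζ hma hmb)
  rw [integral_re hGi, hG, RCLike.re_to_complex, Complex.add_re, Complex.ofReal_re] at hmean
  rw [abs_le] at *
  constructor <;> linarith

end MeanIncrement

section CenteredJet

open Asymptotics

lemma tendsto_norm_fst_zero (E S : Type*) [SeminormedAddCommGroup E] :
    Tendsto (fun q : E × S => ‖q.1‖) (nhds 0 ×ˢ ⊤) (nhds 0) :=
  tendsto_norm_zero.comp tendsto_fst

variable {S : Type*} [MeasurableSpace S] {μ : Measure S} {A : Type*} [NormedRing A]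
  [NormedAlgebra ℝ A]

/-- A random element `f (λ, e)` has, uniformly in the randomness, the first-order expansion
`f₀ + e f₁ + λ D` at `(0, 0)`, where `D` is bounded and centered. -/
structure HasCenteredJet (μ : Measure S) (f : ℝ × ℝ → S → A) (f₀ f₁ : A) (D : S → A) : Prop where
  stronglyMeasurable : StronglyMeasurable D
  exists_norm_le : ∃ C, ∀ s, ‖D s‖ ≤ C
  integral_eq_zero : ∫ s, D s ∂μ = 0
  isBigO : (fun q : (ℝ × ℝ) × S => f q.1 q.2 - (f₀ + q.1.2 • f₁ + q.1.1 • D q.2))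
    =O[nhds 0 ×ˢ ⊤] fun q => ‖q.1‖ ^ 2

namespace HasCenteredJet

lemma of_eq {f₀ f₁ : A} {D : S → A} (hDm : StronglyMeasurable D)
    {C : ℝ} (hD : ∀ s, ‖D s‖ ≤ C) (hD0 : ∫ s, D s ∂μ = 0) :
    HasCenteredJet μ (fun p s => f₀ + p.2 • f₁ + p.1 • D s) f₀ f₁ D where
  stronglyMeasurable := hDm
  exists_norm_le := ⟨C, hD⟩
  integral_eq_zero := hD0
  isBigO := by simpa only [sub_self] using isBigO_zero _ _

lemma const (c : A) : HasCenteredJet μ (fun _ _ => c) c 0 0 := by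
  simpa using of_eq (f₀ := c) (f₁ := 0) (D := 0) (μ := μ) stronglyMeasurable_const
    (C := 0) (by simp) (by simp)

variable {f g : ℝ × ℝ → S → A} {f₀ f₁ g₀ g₁ : A} {D E : S → A}

lemma congr (hf : HasCenteredJet μ f f₀ f₁ D) (h : ∀ p s, f p s = g p s) :
    HasCenteredJet μ g f₀ f₁ D := by
  rwa [← funext₂ h]

lemma integrable [IsFiniteMeasure μ] (hf : HasCenteredJet μ f f₀ f₁ D) : Integrable D μ :=
  let ⟨C, hC⟩ := hf.exists_norm_le
  .of_bound hf.stronglyMeasurable.aestronglyMeasurable C (Eventually.of_forall hC)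

lemma isBigO_linear (hf : HasCenteredJet μ f f₀ f₁ D) :
    (fun q : (ℝ × ℝ) × S => q.1.2 • f₁ + q.1.1 • D q.2) =O[nhds 0 ×ˢ ⊤] fun q => ‖q.1‖ := by
  obtain ⟨C, hC⟩ := hf.exists_norm_le
  refine .of_bound (‖f₁‖ + C) (Eventually.of_forall fun q => ?_)
  rw [norm_norm]
  calc ‖q.1.2 • f₁ + q.1.1 • D q.2‖ ≤ ‖q.1.2‖ * ‖f₁‖ + ‖q.1.1‖ * ‖D q.2‖ := by
        rw [← norm_smul, ← norm_smul]; exact norm_add_le _ _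
    _ ≤ ‖q.1‖ * ‖f₁‖ + ‖q.1‖ * C := by
        gcongr
        exacts [norm_snd_le q.1, norm_fst_le q.1, hC q.2]
    _ = (‖f₁‖ + C) * ‖q.1‖ := by ring

lemma isBigO_sub_const (hf : HasCenteredJet μ f f₀ f₁ D) :
    (fun q : (ℝ × ℝ) × S => f q.1 q.2 - f₀) =O[nhds 0 ×ˢ ⊤] fun q => ‖q.1‖ := by
  have hsq : (fun q : (ℝ × ℝ) × S => ‖q.1‖ ^ 2) =O[nhds 0 ×ˢ ⊤] fun q => ‖q.1‖ := by
    simpa only [pow_two, one_mul] using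
      ((tendsto_norm_fst_zero (ℝ × ℝ) S).isBigO_one ℝ).mul
        (isBigO_refl (fun q : (ℝ × ℝ) × S => ‖q.1‖) _)
  refine ((hf.isBigO.trans hsq).add hf.isBigO_linear).congr_left fun q => ?_
  abel

lemma tendsto (hf : HasCenteredJet μ f f₀ f₁ D) :
    Tendsto (fun q : (ℝ × ℝ) × S => f q.1 q.2) (nhds 0 ×ˢ ⊤) (nhds f₀) :=
  tendsto_sub_nhds_zero_iff.mp (hf.isBigO_sub_const.trans_tendsto (tendsto_norm_fst_zero _ _))

lemma add [IsFiniteMeasure μ] (hf : HasCenteredJet μ f f₀ f₁ D)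
    (hg : HasCenteredJet μ g g₀ g₁ E) :
    HasCenteredJet μ (fun p s => f p s + g p s) (f₀ + g₀) (f₁ + g₁) (fun s => D s + E s) where
  stronglyMeasurable := hf.stronglyMeasurable.add hg.stronglyMeasurable
  exists_norm_le :=
    let ⟨C, hC⟩ := hf.exists_norm_le
    let ⟨C', hC'⟩ := hg.exists_norm_le
    ⟨C + C', fun s => norm_add_le_of_le (hC s) (hC' s)⟩
  integral_eq_zero := by
    rw [integral_add hf.integrable hg.integrable, hf.integral_eq_zero, hg.integral_eq_zero,
      add_zero]
  isBigO := (hf.isBigO.add hg.isBigO).congr_left fun q => by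
    simp only [smul_add]
    abel

lemma mul [CompleteSpace A] [IsFiniteMeasure μ] (hf : HasCenteredJet μ f f₀ f₁ D)
    (hg : HasCenteredJet μ g g₀ g₁ E) :
    HasCenteredJet μ (fun p s => f p s * g p s) (f₀ * g₀) (f₁ * g₀ + f₀ * g₁)
      (fun s => D s * g₀ + f₀ * E s) where
  stronglyMeasurable := (hf.stronglyMeasurable.mul stronglyMeasurable_const).add
    (stronglyMeasurable_const.mul hg.stronglyMeasurable)
  exists_norm_le :=
    let ⟨C, hC⟩ := hf.exists_norm_le
    let ⟨C', hC'⟩ := hg.exists_norm_le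
    ⟨C * ‖g₀‖ + ‖f₀‖ * C', fun s => norm_add_le_of_le
      (norm_mul_le_of_le (hC s) le_rfl) (norm_mul_le_of_le le_rfl (hC' s))⟩
  integral_eq_zero := by
    rw [integral_add (hf.integrable.mul_const _) (hg.integrable.const_mul _),
      integral_mul_const_of_integrable hf.integrable,
        integral_const_mul_of_integrable hg.integrable,
      hf.integral_eq_zero, hg.integral_eq_zero, zero_mul, mul_zero, add_zero]
  isBigO := by
    have hfst := hf.isBigO.mul (hg.tendsto.isBigO_one ℝ)
    have hsnd := (isBigO_const_const f₀ (one_ne_zero' ℝ) _).mul hg.isBigO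
    have hcross := hf.isBigO_linear.mul hg.isBigO_sub_const
    simp only [mul_one, one_mul, ← pow_two] at hfst hsnd hcross
    refine ((hfst.add hsnd).add hcross).congr_left fun q => ?_
    simp only [mul_add, add_mul, mul_sub, sub_mul, smul_add, smul_mul_assoc, mul_smul_comm]
    abel

lemma inv {f : ℝ × ℝ → S → ℝ} {f₀ f₁ : ℝ} {D : S → ℝ} (hf : HasCenteredJet μ f f₀ f₁ D)
    (h0 : f₀ ≠ 0) :
    HasCenteredJet μ (fun p s => (f p s)⁻¹) f₀⁻¹ (-(f₀ ^ 2)⁻¹ * f₁)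
      (fun s => -(f₀ ^ 2)⁻¹ * D s) where
  stronglyMeasurable := stronglyMeasurable_const.mul hf.stronglyMeasurable
  exists_norm_le :=
    let ⟨C, hC⟩ := hf.exists_norm_le
    ⟨_, fun s => norm_mul_le_of_le le_rfl (hC s)⟩
  integral_eq_zero := by rw [integral_const_mul, hf.integral_eq_zero, mul_zero]
  isBigO := by
    have hlin := hf.isBigO_linear.mul hf.isBigO_sub_const
    have hrem := hf.isBigO.const_mul_left f₀
    simp only [← pow_two] at hlin
    have hinv := ((hf.tendsto.inv₀ h0).isBigO_one ℝ).const_mul_left (f₀ ^ 2)⁻¹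
    have hne : ∀ᶠ q : (ℝ × ℝ) × S in nhds 0 ×ˢ ⊤, f q.1 q.2 ≠ 0 :=
      hf.tendsto.eventually_ne h0
    have hmul := hinv.mul (hlin.sub hrem)
    simp only [one_mul] at hmul
    refine hmul.congr' (hne.mono fun q hq => ?_) EventuallyEq.rfl
    simp only [smul_eq_mul]
    field_simp
    ring

lemma smul_const [CompleteSpace A] {f : ℝ × ℝ → S → ℝ} {f₀ f₁ : ℝ} {D : S → ℝ}
    (hf : HasCenteredJet μ f f₀ f₁ D) (c : A) :
    HasCenteredJet μ (fun p s => f p s • c) (f₀ • c) (f₁ • c) (fun s => D s • c) where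
  stronglyMeasurable := hf.stronglyMeasurable.smul_const c
  exists_norm_le :=
    let ⟨C, hC⟩ := hf.exists_norm_le
    ⟨C * ‖c‖, fun s => by rw [norm_smul]; gcongr; exact hC s⟩
  integral_eq_zero := by rw [integral_smul_const, hf.integral_eq_zero, zero_smul]
  isBigO := by
    refine (hf.isBigO.smul (isBigO_const_const c (one_ne_zero' ℝ) _)).congr (fun q => ?_)
      fun q => ?_
    · simp only [sub_smul, add_smul, smul_assoc]
    · rw [smul_eq_mul, mul_one]

lemma isBigO_nhds (hf : HasCenteredJet μ f f₀ f₁ D) (s : S) :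
    (fun p : ℝ × ℝ => f p s - (f₀ + p.2 • f₁ + p.1 • D s)) =O[nhds 0] fun p => ‖p - 0‖ ^ 2 := by
  simpa only [sub_zero, Function.comp_def] using hf.isBigO.comp_tendsto
    (k := fun p : ℝ × ℝ => (p, s)) (tendsto_id.prodMk tendsto_top)

lemma apply_zero (hf : HasCenteredJet μ f f₀ f₁ D) (s : S) : f 0 s = f₀ := by
  simpa [sub_eq_zero] using (hf.isBigO_nhds s).eq_zero_of_norm_pow two_ne_zero

lemma hasFDerivAt (hf : HasCenteredJet μ f f₀ f₁ D) (s : S) :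
    HasFDerivAt (fun p => f p s) ((ContinuousLinearMap.snd ℝ ℝ ℝ).smulRight f₁ +
      (ContinuousLinearMap.fst ℝ ℝ ℝ).smulRight (D s)) 0 := by
  have hlin : HasFDerivAt (fun p : ℝ × ℝ => f₀ + p.2 • f₁ + p.1 • D s)
      ((ContinuousLinearMap.snd ℝ ℝ ℝ).smulRight f₁ +
        (ContinuousLinearMap.fst ℝ ℝ ℝ).smulRight (D s)) 0 :=
    ((hasFDerivAt_snd.smul_const f₁).const_add f₀).add (hasFDerivAt_fst.smul_const (D s))
  simpa [Pi.add_def] using ((hf.isBigO_nhds s).hasFDerivAt one_lt_two).add hlin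

lemma hasDerivAt_energy (hf : HasCenteredJet μ f f₀ f₁ D) (s : S) :
    HasDerivAt (fun e => f (0, e) s) f₁ 0 := by
  simpa [Function.comp_def] using (hf.hasFDerivAt s).comp_hasDerivAt (0 : ℝ)
    ((hasDerivAt_const (0 : ℝ) (0 : ℝ)).prodMk (hasDerivAt_id' (0 : ℝ)))

lemma hasDerivAt_disorder (hf : HasCenteredJet μ f f₀ f₁ D) (s : S) :
    HasDerivAt (fun l => f (l, 0) s) (D s) 0 := by
  simpa [Function.comp_def] using HasFDerivAt.comp_hasDerivAt
    (f := fun l : ℝ => (l, (0 : ℝ))) (0 : ℝ) (hf.hasFDerivAt s)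
    ((hasDerivAt_id' (0 : ℝ)).prodMk (hasDerivAt_const (0 : ℝ) (0 : ℝ)))

end HasCenteredJet

end CenteredJet

section CellTransferMatrix

lemma transfer_eq_smul (E t v : ℝ) : transfer E t v =
    ((E - v) * t⁻¹) • !![1, 0; 0, 0] + t⁻¹ • !![0, 0; 1, 0] + t • !![0, -1; 0, 0] := by
  ext i j
  fin_cases i <;> fin_cases j <;> simp [transfer, div_eq_mul_inv]

lemma det_transfer {t : ℝ} (E v : ℝ) (ht : t ≠ 0) : (transfer E t v).det = 1 := by
  simp [transfer, Matrix.det_fin_two, ht]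

variable {S : Type*} {L : ℕ} {that vhat : ℕ → ℝ} {ttil vtil : ℕ → S → ℝ}

lemma eventually_det_cellT (hthat : ∀ l < L, 0 < that l) (hbdd : ∀ l < L, ∀ s, |ttil l s| ≤ 1) :
    ∀ᶠ lam in nhds 0, ∀ E s, (cellT L that vhat ttil vtil lam E s).det = 1 := by
  have hsmall : ∀ᶠ lam : ℝ in nhds 0, ∀ l : Fin L, |lam| < that l :=
    eventually_all.mpr fun l => eventually_abs_sub_lt 0 (hthat l l.2) |>.mono fun lam h => by
      simpa using h
  refine hsmall.mono fun lam hlam E s => ?_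
  rw [cellT, ← Matrix.coe_detMonoidHom, map_list_prod, List.prod_eq_one]
  simp only [List.mem_map, List.mem_ofFn, forall_exists_index, and_imp, Matrix.coe_detMonoidHom]
  rintro _ _ l rfl rfl
  refine det_transfer _ _ (ne_of_gt ?_)
  have hle : |lam * ttil l s| ≤ |lam| * 1 := by rw [abs_mul]; gcongr; exact hbdd l l.2 s
  linarith [hlam l, neg_abs_le (lam * ttil l s)]

variable [MeasurableSpace S] {μ : Measure S} [IsProbabilityMeasure μ]

lemma stronglyMeasurable_transfer {t v : S → ℝ} (E : ℝ) (ht : Measurable t) (hv : Measurable v) :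
    StronglyMeasurable fun s => transfer E (t s) (v s) := by
  simp only [transfer_eq_smul]
  exact ((((measurable_const.sub hv).mul ht.inv).stronglyMeasurable.smul_const _).add
    (ht.inv.stronglyMeasurable.smul_const _)).add (ht.stronglyMeasurable.smul_const _)

lemma exists_hasCenteredJet_transfer {t v : S → ℝ} {t₀ : ℝ} (E v₀ : ℝ) (ht₀ : t₀ ≠ 0)
    (ht : Measurable t) (hv : Measurable v) (hbdd : ∀ s, |t s| ≤ 1 ∧ |v s| ≤ 1)
    (hcent : ∫ s, t s ∂μ = 0 ∧ ∫ s, v s ∂μ = 0) :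
    ∃ f₀ f₁ D, HasCenteredJet μ
      (fun p s => transfer (E + p.2) (t₀ + p.1 * t s) (v₀ + p.1 * v s)) f₀ f₁ D := by
  have hhop : HasCenteredJet μ (fun p s => t₀ + p.1 * t s) t₀ 0 t :=
    (HasCenteredJet.of_eq ht.stronglyMeasurable (fun s => (hbdd s).1) hcent.1).congr
      fun p s => by simp
  have hpot : HasCenteredJet μ (fun p s => E + p.2 - (v₀ + p.1 * v s)) (E - v₀) 1 (fun s => -v s) :=
    (HasCenteredJet.of_eq (D := fun s => -v s) hv.neg.stronglyMeasurable
      (fun s => (norm_neg _).trans_le (hbdd s).2)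
      (by rw [integral_neg, hcent.2, neg_zero])).congr fun p s => by
        simp only [smul_eq_mul]; ring
  have hinv := hhop.inv ht₀
  exact ⟨_, _, _, ((((hpot.mul hinv).smul_const _).add (hinv.smul_const _)).add
    (hhop.smul_const _)).congr fun p s => (transfer_eq_smul _ _ _).symm⟩

lemma exists_hasCenteredJet_prod_ofFn {A : Type*} [NormedRing A] [NormedAlgebra ℝ A]
    [CompleteSpace A] {n : ℕ} {F : Fin n → ℝ × ℝ → S → A}
    (hF : ∀ l, ∃ f₀ f₁ D, HasCenteredJet μ (F l) f₀ f₁ D) :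
    ∃ f₀ f₁ D, HasCenteredJet μ (fun p s => (List.ofFn fun l => F l p s).prod) f₀ f₁ D := by
  induction n with
  | zero => exact ⟨1, 0, 0, by simpa using HasCenteredJet.const 1⟩
  | succ n ih =>
    obtain ⟨f₀, f₁, D, h⟩ := hF 0
    obtain ⟨g₀, g₁, E, h'⟩ := ih fun l => hF l.succ
    exact ⟨_, _, _, (h.mul h').congr fun p s => by simp only [List.ofFn_succ, List.prod_cons]⟩

lemma stronglyMeasurable_prod_ofFn {A : Type*} [NormedRing A] {n : ℕ} {F : Fin n → S → A}
    (hF : ∀ l, StronglyMeasurable (F l)) :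
    StronglyMeasurable fun s => (List.ofFn fun l => F l s).prod := by
  induction n with
  | zero => simpa using stronglyMeasurable_const
  | succ n ih =>
    simp only [List.ofFn_succ, List.prod_cons]
    exact (hF 0).mul (ih fun l => hF l.succ)

lemma stronglyMeasurable_cellT (hmeas : ∀ l < L, Measurable (ttil l) ∧ Measurable (vtil l))
    (lam E : ℝ) : StronglyMeasurable (cellT L that vhat ttil vtil lam E) :=
  stronglyMeasurable_prod_ofFn fun l => stronglyMeasurable_transfer E
    (((hmeas l l.2).1.const_mul lam).const_add _) (((hmeas l l.2).2.const_mul lam).const_add _)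

lemma exists_hasCenteredJet_cellT (hthat : ∀ l < L, 0 < that l)
    (hmeas : ∀ l < L, Measurable (ttil l) ∧ Measurable (vtil l))
    (hbdd : ∀ l < L, ∀ s, |ttil l s| ≤ 1 ∧ |vtil l s| ≤ 1)
    (hcent : ∀ l < L, ∫ s, ttil l s ∂μ = 0 ∧ ∫ s, vtil l s ∂μ = 0) (E : ℝ) :
    ∃ f₀ f₁ D, HasCenteredJet μ
      (fun p s => cellT L that vhat ttil vtil p.1 (E + p.2) s) f₀ f₁ D :=
  exists_hasCenteredJet_prod_ofFn fun l => exists_hasCenteredJet_transfer E (vhat l)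
    (hthat l l.2).ne' (hmeas l l.2).1 (hmeas l l.2).2 (hbdd l l.2) (hcent l l.2)

end CellTransferMatrix

section RandomRotation

variable {S : Type*} [MeasurableSpace S] {μ : Measure S} [IsProbabilityMeasure μ] {T : S → M₂}
  {τ : S → ℝ} {w : ℂ} {y δ B m : ℝ}

lemma exists_hasLyapunovExponent_rotation (hTm : StronglyMeasurable T)
    (hdet : ∀ s, (T s).det = 1) (hτm : StronglyMeasurable τ) (hw : ‖w‖ = 1) (hw₂ : w ^ 2 ≠ 1)
    (hw₄ : w ^ 4 ≠ 1) (hB₂ : ∫ s, τ s ^ 2 ∂μ ≤ B * ‖w ^ 2 - 1‖)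
    (hB₄ : ∫ s, τ s ^ 2 ∂μ ≤ 2 * B * ‖w ^ 4 - 1‖) (hy : y ≤ 1 / 4)
    (ha : ∀ s, ‖linPart (T s) - w‖ ≤ y) (hb : ∀ s, ‖antilinPart (T s)‖ ≤ y) (hτ : ∀ s, |τ s| ≤ y)
    (haτ : ∀ s, ‖linPart (T s) - w - w * (Complex.I * τ s)‖ ≤ δ)
    (hbτ : ∀ s, ‖antilinPart (T s) - w * (Complex.I * τ s)‖ ≤ δ)
    (hma : ‖∫ s, linPart (T s) - w ∂μ‖ ≤ m) (hmb : ‖∫ s, antilinPart (T s) ∂μ‖ ≤ m) :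
    ∃ γ, HasLyapunovExponent μ T γ ∧ |γ - (∫ s, τ s ^ 2 ∂μ) / 2| ≤
      8 * y ^ 3 + 4 * y * δ + 112 * B * y ^ 2 + (2 + 12 * B) * m := by
  have hw0 : w ≠ 0 := norm_ne_zero_iff.mp (hw ▸ one_ne_zero)
  have hT (s : S) : ‖T s‖ ≤ 2 * (y + 1) := by
    have := norm_le_two_mul_norm_linPart (hdet s)
    have := norm_le_norm_sub_add (linPart (T s)) w
    linarith [ha s]
  have hdiv (z : ℂ) : ‖z / w‖ = ‖z‖ := by rw [norm_div, hw, div_one]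
  have hsub (z u : ℂ) : ‖z / w - u‖ = ‖z - w * u‖ := by
    rw [div_sub' hw0, hdiv]
  have hV : ‖(-(∫ s, τ s ^ 2 ∂μ : ℝ) : ℂ)‖ = ∫ s, τ s ^ 2 ∂μ := by
    rw [norm_neg, Complex.norm_real, norm_of_nonneg (integral_nonneg fun s => sq_nonneg _)]
  have h₂ := sub_ne_zero.mpr hw₂
  have h₄ := sub_ne_zero.mpr hw₄
  refine exists_hasLyapunovExponent_of_stepIncrement
    (α := -(∫ s, τ s ^ 2 ∂μ : ℝ) / (w ^ 2 - 1)) (β := -(∫ s, τ s ^ 2 ∂μ : ℝ) / 2 / (w ^ 4 - 1))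
    hTm hT hdet fun ζ hζ => ?_
  have hlin (s : S) : linPart (T s) = w * (1 + (linPart (T s) - w) / w) := by field_simp; ring
  have hanti (s : S) : antilinPart (T s) = w * (antilinPart (T s) / w) := by field_simp
  have hlm := linPart.continuous.comp_stronglyMeasurable hTm
  have ham := antilinPart.continuous.comp_stronglyMeasurable hTm
  rw [integral_congr_ae (Eventually.of_forall fun s => by rw [hlin s, hanti s])]
  refine abs_integral_stepIncrement_rotation_sub_le hw ?_ ?_ ?_ ?_
    ((hlm.sub stronglyMeasurable_const).div stronglyMeasurable_const)
    (ham.div stronglyMeasurable_const) hτm hy (fun s => (hdiv _).trans_le (ha s))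
    (fun s => (hdiv _).trans_le (hb s)) hτ
    (fun s => (hsub _ _).trans_le (haτ s)) (fun s => (hsub _ _).trans_le (hbτ s)) ?_ ?_ hζ
  · rw [norm_div, hV, div_le_iff₀ (norm_pos_iff.mpr h₂)]; exact hB₂
  · rw [norm_div, norm_div, hV, Complex.norm_two, div_le_iff₀ (norm_pos_iff.mpr h₄)]; linarith
  · rw [div_mul_cancel₀ _ h₂]
  · rw [div_mul_cancel₀ _ h₄, mul_div_cancel₀ _ two_ne_zero]
  · rw [integral_div, hdiv]; exact hma
  · rw [integral_div, hdiv]; exact hmb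

lemma scale_error_le {κ θ C : ℝ} (hκ : 0 < κ) (hθ : 0 < θ) (hC : 1 ≤ C) (hk : C * (κ + θ) ≤ 1 / 4) :
    8 * (C * (κ + θ)) ^ 3 + 4 * (C * (κ + θ)) * (C * (θ * (κ + θ))) +
      112 * (C ^ 3 * (κ + θ) ^ 2 / θ) * (C * (κ + θ)) ^ 2 +
      (2 + 12 * (C ^ 3 * (κ + θ) ^ 2 / θ)) * (C * (θ * (κ + θ) ^ 2)) ≤
    138 * C ^ 5 * ((κ + θ) ^ 4 / θ) := by
  have hθk : θ ≤ κ + θ := by linarith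
  set k := κ + θ
  have hk1 : k ≤ 1 := by nlinarith
  have hcube : k ^ 3 ≤ k ^ 4 / θ := by
    rw [le_div_iff₀ hθ, pow_succ k 3]
    gcongr
  have hsq : θ * k ^ 2 ≤ k ^ 4 / θ := by
    rw [le_div_iff₀ hθ]
    calc θ * k ^ 2 * θ ≤ k * k ^ 2 * k := by gcongr
      _ = k ^ 4 := by ring
  have hfourth : k ^ 4 ≤ k ^ 4 / θ := le_div_self (by positivity) hθ (hθk.trans hk1)
  have h₁ : C ^ 1 ≤ C ^ 5 := pow_le_pow_right₀ hC (by norm_num)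
  have h₂ : C ^ 2 ≤ C ^ 5 := pow_le_pow_right₀ hC (by norm_num)
  have h₃ : C ^ 3 ≤ C ^ 5 := pow_le_pow_right₀ hC (by norm_num)
  have h₄ : C ^ 4 ≤ C ^ 5 := pow_le_pow_right₀ hC (by norm_num)
  calc _ = 8 * (C ^ 3 * k ^ 3) + 4 * (C ^ 2 * (θ * k ^ 2)) + 112 * (C ^ 5 * (k ^ 4 / θ)) +
        2 * (C ^ 1 * (θ * k ^ 2)) + 12 * (C ^ 4 * k ^ 4) := by field_simp; ring
    _ ≤ 8 * (C ^ 5 * (k ^ 4 / θ)) + 4 * (C ^ 5 * (k ^ 4 / θ)) + 112 * (C ^ 5 * (k ^ 4 / θ)) +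
        2 * (C ^ 5 * (k ^ 4 / θ)) + 12 * (C ^ 5 * (k ^ 4 / θ)) := by gcongr
    _ = 138 * C ^ 5 * (k ^ 4 / θ) := by ring

lemma exists_hasLyapunovExponent_rotation_of_scales {κ θ C : ℝ} (hκ : 0 < κ) (hθ : 0 < θ)
    (hC : 1 ≤ C) (hk : C * (κ + θ) ≤ 1 / 4) (hTm : StronglyMeasurable T)
    (hdet : ∀ s, (T s).det = 1) (hτm : StronglyMeasurable τ) (hw : ‖w‖ = 1)
    (hw₂ : θ ≤ C * ‖w ^ 2 - 1‖) (hw₄ : θ ≤ C * ‖w ^ 4 - 1‖)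
    (ha : ∀ s, ‖linPart (T s) - w‖ ≤ C * (κ + θ)) (hb : ∀ s, ‖antilinPart (T s)‖ ≤ C * (κ + θ))
    (hτ : ∀ s, |τ s| ≤ C * (κ + θ))
    (haτ : ∀ s, ‖linPart (T s) - w - w * (Complex.I * τ s)‖ ≤ C * (θ * (κ + θ)))
    (hbτ : ∀ s, ‖antilinPart (T s) - w * (Complex.I * τ s)‖ ≤ C * (θ * (κ + θ)))
    (hma : ‖∫ s, linPart (T s) - w ∂μ‖ ≤ C * (θ * (κ + θ) ^ 2))
    (hmb : ‖∫ s, antilinPart (T s) ∂μ‖ ≤ C * (θ * (κ + θ) ^ 2)) :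
    ∃ γ, HasLyapunovExponent μ T γ ∧
      |γ - (∫ s, τ s ^ 2 ∂μ) / 2| ≤ 138 * C ^ 5 * ((κ + θ) ^ 4 / θ) := by
  have hne {z : ℂ} (hz : θ ≤ C * ‖z - 1‖) : z ≠ 1 := by
    rintro rfl
    rw [sub_self, norm_zero, mul_zero] at hz
    exact hz.not_gt hθ
  have hV : ∫ s, τ s ^ 2 ∂μ ≤ (C * (κ + θ)) ^ 2 := by
    refine (le_abs_self _).trans ?_
    simpa using norm_integral_le_of_norm_le_const (μ := μ) (f := fun s => τ s ^ 2)
      (Eventually.of_forall fun s => by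
        rw [norm_pow]; exact pow_le_pow_left₀ (norm_nonneg _) (hτ s) 2)
  have hB {z : ℂ} (hz : θ ≤ C * ‖z - 1‖) :
      ∫ s, τ s ^ 2 ∂μ ≤ C ^ 3 * (κ + θ) ^ 2 / θ * ‖z - 1‖ := by
    refine hV.trans ?_
    rw [div_mul_eq_mul_div, le_div_iff₀ hθ]
    calc (C * (κ + θ)) ^ 2 * θ ≤ (C * (κ + θ)) ^ 2 * (C * ‖z - 1‖) := by gcongr
      _ = _ := by ring
  have hB₄ := hB hw₄
  obtain ⟨γ, hγ, hle⟩ := exists_hasLyapunovExponent_rotation hTm hdet hτm hw (hne hw₂) (hne hw₄)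
    (hB hw₂) (hB₄.trans (by
      nlinarith [show 0 ≤ C ^ 3 * (κ + θ) ^ 2 / θ * ‖w ^ 4 - 1‖ by positivity]))
    hk ha hb hτ haτ hbτ hma hmb
  exact ⟨γ, hγ, hle.trans (scale_error_le hκ hθ hC hk)⟩

end RandomRotation

section EllipticFrame

lemma abs_apply_le_norm (P : M₂) (i j : Fin 2) : |P i j| ≤ ‖P‖ := by
  rw [← matNorm_eq_norm, matNorm]
  exact abs_le_sqrt ((Finset.single_le_sum (fun j _ => sq_nonneg (P i j)) (Finset.mem_univ j)).trans
    (Finset.single_le_sum (f := fun i => ∑ j, P i j ^ 2)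
      (fun i _ => Finset.sum_nonneg fun j _ => sq_nonneg _) (Finset.mem_univ i)))

lemma abs_mul_apply_le_norm {c : ℝ} (hc : |c| ≤ 1) (P : M₂) : |c * P 0 1| ≤ ‖P‖ := by
  rw [abs_mul]
  exact (mul_le_of_le_one_left (abs_nonneg _) hc).trans (abs_apply_le_norm P 0 1)

/-- The change of basis that turns an elliptic matrix into a rotation, once the scale `ν` and the
shear `m` are those of the matrix (`ellipticScale`, `ellipticShear`). -/
noncomputable def ellipticFrame (ν m : ℝ) (hν : ν ≠ 0) : M₂ˣ where
  val := !![ν, 0; m, 1]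
  inv := !![ν⁻¹, 0; -m * ν⁻¹, 1]
  val_inv := by simp [hν, Matrix.one_fin_two]
  inv_val := by simp [hν, Matrix.one_fin_two]

variable {ν m : ℝ}

lemma ellipticFrame_conj (hν : ν ≠ 0) (P : M₂) :
    (ellipticFrame ν m hν).val * P * (ellipticFrame ν m hν)⁻¹.val =
      !![P 0 0 - m * P 0 1, ν * P 0 1;
        (P 1 0 + m * (P 0 0 - P 1 1) - m ^ 2 * P 0 1) / ν, m * P 0 1 + P 1 1] := by
  change !![ν, 0; m, 1] * P * !![ν⁻¹, 0; -m * ν⁻¹, 1] = _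
  rw [Matrix.eta_fin_two P]
  ext i j
  fin_cases i <;> fin_cases j <;> simp <;> field_simp <;> ring

/-- The error of approximating the lower left entry of `M P M⁻¹` by `P 1 0 / ν`, where `M` is the
elliptic frame with scale `ν` and shear `m`. -/
noncomputable def shearError (ν m : ℝ) (P : M₂) : ℝ := (m * (P 0 0 - P 1 1) - m ^ 2 * P 0 1) / ν

lemma abs_shearError_le (hν : 0 < ν) (hν₁ : ν ≤ 1) (hm : |m| ≤ ν) (P : M₂) :
    |shearError ν m P| ≤ 3 * ‖P‖ := by
  rw [shearError, abs_div, abs_of_pos hν, div_le_iff₀ hν]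
  calc |m * (P 0 0 - P 1 1) - m ^ 2 * P 0 1| ≤ |m * (P 0 0 - P 1 1)| + |m ^ 2 * P 0 1| :=
        abs_sub _ _
    _ = |m| * |P 0 0 - P 1 1| + |m| ^ 2 * |P 0 1| := by rw [abs_mul, abs_mul, abs_pow]
    _ ≤ ν * (‖P‖ + ‖P‖) + ν ^ 2 * ‖P‖ := by
        gcongr
        · exact (abs_sub _ _).trans (add_le_add (abs_apply_le_norm P 0 0) (abs_apply_le_norm P 1 1))
        · exact abs_apply_le_norm P 0 1
    _ ≤ 3 * ‖P‖ * ν := by nlinarith [mul_nonneg hν.le (norm_nonneg P)]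

lemma norm_linPart_ellipticFrame_conj_sub_le (hν : 0 < ν) (hν₁ : ν ≤ 1) (hm : |m| ≤ ν) (P : M₂) :
    ‖linPart ((ellipticFrame ν m hν.ne').val * P * (ellipticFrame ν m hν.ne')⁻¹.val) -
      Complex.I * (P 1 0 / (2 * ν) : ℝ)‖ ≤ 4 * ‖P‖ := by
  have hz : linPart ((ellipticFrame ν m hν.ne').val * P * (ellipticFrame ν m hν.ne')⁻¹.val) -
      Complex.I * (P 1 0 / (2 * ν) : ℝ) =
        ⟨(P 0 0 + P 1 1) / 2, (shearError ν m P - ν * P 0 1) / 2⟩ := by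
    rw [ellipticFrame_conj]
    apply Complex.ext <;> simp [linPart_apply, shearError, -Complex.ofReal_div] <;> field_simp <;>
      ring
  rw [hz]
  refine (Complex.norm_le_abs_re_add_abs_im _).trans ?_
  have herr := abs_le.mp (abs_shearError_le hν hν₁ hm P)
  have h₀₁ := abs_le.mp (abs_mul_apply_le_norm (abs_of_pos hν ▸ hν₁) P)
  have h₀₀ := abs_le.mp (abs_apply_le_norm P 0 0)
  have h₁₁ := abs_le.mp (abs_apply_le_norm P 1 1)
  have hre : |(P 0 0 + P 1 1) / 2| ≤ 2 * ‖P‖ := abs_le.mpr (by constructor <;> linarith)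
  have him : |(shearError ν m P - ν * P 0 1) / 2| ≤ 2 * ‖P‖ :=
    abs_le.mpr (by constructor <;> linarith)
  linarith

lemma norm_antilinPart_ellipticFrame_conj_sub_le (hν : 0 < ν) (hν₁ : ν ≤ 1) (hm : |m| ≤ ν)
    (P : M₂) :
    ‖antilinPart ((ellipticFrame ν m hν.ne').val * P * (ellipticFrame ν m hν.ne')⁻¹.val) -
      Complex.I * (P 1 0 / (2 * ν) : ℝ)‖ ≤ 4 * ‖P‖ := by
  have hz : antilinPart ((ellipticFrame ν m hν.ne').val * P * (ellipticFrame ν m hν.ne')⁻¹.val) -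
      Complex.I * (P 1 0 / (2 * ν) : ℝ) =
        ⟨(P 0 0 - P 1 1) / 2 - m * P 0 1, (shearError ν m P + ν * P 0 1) / 2⟩ := by
    rw [ellipticFrame_conj]
    apply Complex.ext <;> simp [antilinPart_apply, shearError, -Complex.ofReal_div] <;>
      field_simp <;> ring
  rw [hz]
  refine (Complex.norm_le_abs_re_add_abs_im _).trans ?_
  have herr := abs_le.mp (abs_shearError_le hν hν₁ hm P)
  have h₀₁ := abs_le.mp (abs_mul_apply_le_norm (abs_of_pos hν ▸ hν₁) P)
  have hm₀₁ := abs_le.mp (abs_mul_apply_le_norm (hm.trans hν₁) P)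
  have h₀₀ := abs_le.mp (abs_apply_le_norm P 0 0)
  have h₁₁ := abs_le.mp (abs_apply_le_norm P 1 1)
  have hre : |(P 0 0 - P 1 1) / 2 - m * P 0 1| ≤ 2 * ‖P‖ :=
    abs_le.mpr (by constructor <;> linarith)
  have him : |(shearError ν m P + ν * P 0 1) / 2| ≤ 2 * ‖P‖ :=
    abs_le.mpr (by constructor <;> linarith)
  linarith

/-- The cosine of the rotation angle of an elliptic matrix. -/
noncomputable def rotationCos (g : M₂) : ℝ := g.trace / 2

/-- The sine of the rotation angle of an elliptic matrix; only used if `|rotationCos g| ≤ 1`. -/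
noncomputable def rotationSin (g : M₂) : ℝ := √(1 - rotationCos g ^ 2)

/-- The eigenvalue of an elliptic matrix by which it acts on `ℂ ≃ ℝ²` in its elliptic frame. -/
noncomputable def multiplier (g : M₂) : ℂ := ⟨rotationCos g, -rotationSin g⟩

/-- The ratio of the axes of the invariant ellipse of an elliptic matrix, after the shear by
`ellipticShear`. -/
noncomputable def ellipticScale (g : M₂) : ℝ := rotationSin g / g 0 1

/-- The shear that aligns the invariant ellipse of an elliptic matrix with the axes. -/
noncomputable def ellipticShear (g : M₂) : ℝ := (g 0 0 - g 1 1) / (2 * g 0 1)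

variable {g : M₂}

lemma rotationSin_sq (hg : |rotationCos g| ≤ 1) : rotationSin g ^ 2 = 1 - rotationCos g ^ 2 :=
  sq_sqrt (sub_nonneg.mpr ((sq_le_one_iff_abs_le_one _).mpr hg))

lemma ellipticFrame_conj_self (hdet : g.det = 1) (hg : |rotationCos g| ≤ 1)
    (hν : ellipticScale g ≠ 0) :
    (ellipticFrame (ellipticScale g) (ellipticShear g) hν).val * g *
      (ellipticFrame (ellipticScale g) (ellipticShear g) hν)⁻¹.val =
        !![rotationCos g, rotationSin g; -rotationSin g, rotationCos g] := by
  have hsin := rotationSin_sq hg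
  obtain ⟨hs0, h01⟩ : rotationSin g ≠ 0 ∧ g 0 1 ≠ 0 := div_ne_zero_iff.mp hν
  rw [Matrix.det_fin_two] at hdet
  rw [ellipticFrame_conj]
  ext i j
  fin_cases i <;> fin_cases j
  · simp [ellipticShear, rotationCos, Matrix.trace_fin_two]; field_simp; ring
  · simp [ellipticScale, h01]
  · simp [ellipticScale, ellipticShear, rotationCos, Matrix.trace_fin_two] at hsin ⊢
    field_simp
    linear_combination -4 * hdet + 4 * hsin
  · simp [ellipticShear, rotationCos, Matrix.trace_fin_two]; field_simp; ring

lemma linPart_ellipticFrame_conj_self (hdet : g.det = 1) (hg : |rotationCos g| ≤ 1)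
    (hν : ellipticScale g ≠ 0) :
    linPart ((ellipticFrame (ellipticScale g) (ellipticShear g) hν).val * g *
      (ellipticFrame (ellipticScale g) (ellipticShear g) hν)⁻¹.val) = multiplier g := by
  rw [ellipticFrame_conj_self hdet hg]
  apply Complex.ext
  · simp [linPart_apply, multiplier]
  · simp [linPart_apply, multiplier]; ring

lemma antilinPart_ellipticFrame_conj_self (hdet : g.det = 1) (hg : |rotationCos g| ≤ 1)
    (hν : ellipticScale g ≠ 0) :
    antilinPart ((ellipticFrame (ellipticScale g) (ellipticShear g) hν).val * g *
      (ellipticFrame (ellipticScale g) (ellipticShear g) hν)⁻¹.val) = 0 := by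
  rw [ellipticFrame_conj_self hdet hg]
  apply Complex.ext <;> simp [antilinPart_apply]

lemma norm_multiplier (hg : |rotationCos g| ≤ 1) : ‖multiplier g‖ = 1 := by
  rw [← sq_eq_sq₀ (norm_nonneg _) zero_le_one, ← Complex.normSq_eq_norm_sq, multiplier,
    Complex.normSq_mk]
  linarith [rotationSin_sq hg]

lemma norm_multiplier_sub_one_sq (hg : |rotationCos g| ≤ 1) :
    ‖multiplier g - 1‖ ^ 2 = 2 - g.trace := by
  rw [← Complex.normSq_eq_norm_sq, Complex.normSq_apply]
  simp only [multiplier, Complex.sub_re, Complex.one_re, Complex.sub_im, Complex.one_im]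
  have := rotationSin_sq hg
  simp only [rotationCos] at *
  linarith

lemma norm_multiplier_sq_sub_one (hg : |rotationCos g| ≤ 1) :
    ‖multiplier g ^ 2 - 1‖ = 2 * rotationSin g := by
  have hsin := rotationSin_sq hg
  have h : multiplier g ^ 2 - 1 = multiplier g * (2 * rotationSin g * -Complex.I) := by
    apply Complex.ext <;> simp [multiplier, pow_two] <;> linarith
  rw [h, norm_mul, norm_multiplier hg]
  simp [abs_of_nonneg (sqrt_nonneg _), rotationSin]

lemma norm_multiplier_pow_four_sub_one (hg : |rotationCos g| ≤ 1) :
    ‖multiplier g ^ 4 - 1‖ = 4 * |rotationCos g| * rotationSin g := by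
  have hsin := rotationSin_sq hg
  have h : multiplier g ^ 2 + 1 = multiplier g * (2 * rotationCos g) := by
    apply Complex.ext <;> simp [multiplier, pow_two] <;> linarith
  rw [show multiplier g ^ 4 - 1 = (multiplier g ^ 2 + 1) * (multiplier g ^ 2 - 1) by ring,
    norm_mul, norm_multiplier_sq_sub_one hg, h, norm_mul, norm_multiplier hg]
  simp
  ring

end EllipticFrame

lemma norm_integral_clm_apply_le {S E F : Type*} [MeasurableSpace S] {μ : Measure S}
    [IsProbabilityMeasure μ] [NormedAddCommGroup E] [NormedSpace ℝ E] [CompleteSpace E]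
    [NormedAddCommGroup F] [NormedSpace ℝ F] [CompleteSpace F] (ℓ : E →L[ℝ] F) {V D : S → E}
    {c B C : ℝ} (hV : StronglyMeasurable V) (hDm : StronglyMeasurable D) (hD : ∀ s, ‖D s‖ ≤ C)
    (hD0 : ∫ s, D s ∂μ = 0) (hB : ∀ s, ‖ℓ (V s - c • D s)‖ ≤ B) : ‖∫ s, ℓ (V s) ∂μ‖ ≤ B := by
  have hDi : Integrable D μ := .of_bound hDm.aestronglyMeasurable C (Eventually.of_forall hD)
  have hlin : Integrable (fun s => c • ℓ (D s)) μ := (ℓ.integrable_comp hDi).smul c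
  have hrem : Integrable (fun s => ℓ (V s - c • D s)) μ :=
    .of_bound (ℓ.continuous.comp_stronglyMeasurable
      (hV.sub (hDm.const_smul c))).aestronglyMeasurable B (Eventually.of_forall hB)
  have hinteg : ∫ s, ℓ (V s) ∂μ = ∫ s, ℓ (V s - c • D s) ∂μ := by
    calc ∫ s, ℓ (V s) ∂μ = ∫ s, (ℓ (V s - c • D s) + c • ℓ (D s)) ∂μ := by simp
      _ = ∫ s, ℓ (V s - c • D s) ∂μ := by
        rw [integral_add hrem hlin, integral_smul, ℓ.integral_comp_comm hDi, hD0, map_zero,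
          smul_zero, add_zero]
  rw [hinteg]
  simpa using norm_integral_le_of_norm_le_const (μ := μ) (Eventually.of_forall hB)

section FrameExpansion

variable {ℓ : M₂ →L[ℝ] ℂ} {κ θ ν C : ℝ} {V D P : M₂} {w : ℂ}

lemma mul_norm_apply_le (hθ : 0 ≤ θ) (hθ₁ : θ ≤ 1) (hC : 1 ≤ C) (hν : 0 < ν) (hθν : θ ≤ C * ν)
    (hℓ : ∀ P, ‖ℓ P - Complex.I * (P 1 0 / (2 * ν) : ℝ)‖ ≤ 4 * ‖P‖) (P : M₂) :
    θ * ‖ℓ P‖ ≤ 5 * C * ‖P‖ := by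
  have hmain : θ * |P 1 0 / (2 * ν)| ≤ C * ‖P‖ := by
    rw [abs_div, abs_of_pos (by positivity : 0 < 2 * ν), ← mul_div_assoc,
      div_le_iff₀ (by positivity)]
    calc θ * |P 1 0| ≤ C * ν * ‖P‖ := by
          gcongr
          exact abs_apply_le_norm P 1 0
      _ ≤ C * ‖P‖ * (2 * ν) := by nlinarith [show 0 ≤ C * ν * ‖P‖ by positivity]
  have hsplit : ‖ℓ P‖ ≤ 4 * ‖P‖ + |P 1 0 / (2 * ν)| := by
    have hI : ‖Complex.I * (P 1 0 / (2 * ν) : ℝ)‖ = |P 1 0 / (2 * ν)| := by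
      rw [norm_mul, Complex.norm_I, one_mul, Complex.norm_real, norm_eq_abs]
    linarith [hℓ P, norm_le_norm_sub_add (ℓ P) (Complex.I * (P 1 0 / (2 * ν) : ℝ))]
  calc θ * ‖ℓ P‖ ≤ θ * (4 * ‖P‖ + |P 1 0 / (2 * ν)|) := by gcongr
    _ = θ * (4 * ‖P‖) + θ * |P 1 0 / (2 * ν)| := by ring
    _ ≤ C * (4 * ‖P‖) + C * ‖P‖ := by gcongr; exact hθ₁.trans hC
    _ = 5 * C * ‖P‖ := by ring

lemma norm_apply_remainder_le (hθ : 0 < θ) (hθ₁ : θ ≤ 1) (hC : 1 ≤ C) (hν : 0 < ν)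
    (hθν : θ ≤ C * ν) (hℓ : ∀ P, ‖ℓ P - Complex.I * (P 1 0 / (2 * ν) : ℝ)‖ ≤ 4 * ‖P‖)
    (hP : ‖P‖ ≤ C * (θ * (κ + θ)) ^ 2) : ‖ℓ P‖ ≤ 5 * C ^ 2 * (θ * (κ + θ) ^ 2) := by
  refine le_of_mul_le_mul_left ?_ hθ
  calc θ * ‖ℓ P‖ ≤ 5 * C * ‖P‖ := mul_norm_apply_le hθ.le hθ₁ hC hν hθν hℓ P
    _ ≤ 5 * C * (C * (θ * (κ + θ)) ^ 2) := by gcongr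
    _ = θ * (5 * C ^ 2 * (θ * (κ + θ) ^ 2)) := by ring

lemma abs_mul_entry_div_le (hκ : 0 ≤ κ) (hθ : 0 ≤ θ) (hC : 0 ≤ C) (hν : 0 < ν) (hθν : θ ≤ C * ν)
    (hD : ‖D‖ ≤ C) : |κ * θ * D 1 0 / (2 * ν)| ≤ C ^ 2 * (κ + θ) := by
  rw [abs_div, abs_of_pos (by positivity : 0 < 2 * ν), div_le_iff₀ (by positivity), abs_mul,
    abs_of_nonneg (by positivity)]
  calc κ * θ * |D 1 0| ≤ κ * (C * ν) * C := by
        gcongr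
        exact (abs_apply_le_norm D 1 0).trans hD
    _ ≤ C ^ 2 * (κ + θ) * (2 * ν) := by
        nlinarith [show 0 ≤ C ^ 2 * κ * ν by positivity, show 0 ≤ C ^ 2 * θ * ν by positivity]

lemma norm_apply_sub_le (hκ : 0 ≤ κ) (hθ : 0 < θ) (hk : κ + θ ≤ 1) (hC : 1 ≤ C) (hν : 0 < ν)
    (hθν : θ ≤ C * ν) (hℓ : ∀ P, ‖ℓ P - Complex.I * (P 1 0 / (2 * ν) : ℝ)‖ ≤ 4 * ‖P‖)
    (hD : ‖D‖ ≤ C) (hV : ‖V - (κ * θ) • D‖ ≤ C * (θ * (κ + θ)) ^ 2) :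
    ‖ℓ V - Complex.I * (κ * θ * D 1 0 / (2 * ν) : ℝ)‖ ≤ 9 * C ^ 2 * (θ * (κ + θ)) := by
  have hrem := norm_apply_remainder_le hθ (by linarith) hC hν hθν hℓ hV
  have hlin : ‖ℓ ((κ * θ) • D) - Complex.I * (κ * θ * D 1 0 / (2 * ν) : ℝ)‖ ≤ 4 * (κ * θ * C) := by
    refine (hℓ ((κ * θ) • D)).trans ?_
    rw [norm_smul, norm_of_nonneg (by positivity)]
    gcongr
  calc ‖ℓ V - Complex.I * (κ * θ * D 1 0 / (2 * ν) : ℝ)‖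
      = ‖ℓ (V - (κ * θ) • D) +
          (ℓ ((κ * θ) • D) - Complex.I * (κ * θ * D 1 0 / (2 * ν) : ℝ))‖ := by
        rw [map_sub]; congr 1; ring
    _ ≤ 5 * C ^ 2 * (θ * (κ + θ) ^ 2) + 4 * (κ * θ * C) := norm_add_le_of_le hrem hlin
    _ ≤ 5 * C ^ 2 * (θ * (κ + θ)) + 4 * ((κ + θ) * θ * C ^ 2) := by
        gcongr
        · exact pow_le_of_le_one (by positivity) hk two_ne_zero
        · linarith
        · exact le_self_pow₀ hC two_ne_zero
    _ = 9 * C ^ 2 * (θ * (κ + θ)) := by ring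

lemma norm_apply_le (hκ : 0 ≤ κ) (hθ : 0 < θ) (hk : κ + θ ≤ 1) (hC : 1 ≤ C) (hν : 0 < ν)
    (hθν : θ ≤ C * ν) (hℓ : ∀ P, ‖ℓ P - Complex.I * (P 1 0 / (2 * ν) : ℝ)‖ ≤ 4 * ‖P‖)
    (hD : ‖D‖ ≤ C) (hV : ‖V - (κ * θ) • D‖ ≤ C * (θ * (κ + θ)) ^ 2) :
    ‖ℓ V‖ ≤ 10 * C ^ 2 * (κ + θ) := by
  have hsub := norm_apply_sub_le hκ hθ hk hC hν hθν hℓ hD hV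
  have hmain : ‖Complex.I * (κ * θ * D 1 0 / (2 * ν) : ℝ)‖ ≤ C ^ 2 * (κ + θ) := by
    rw [norm_mul, Complex.norm_I, one_mul, Complex.norm_real]
    exact abs_mul_entry_div_le hκ hθ.le (by linarith) hν hθν hD
  calc ‖ℓ V‖ ≤ 9 * C ^ 2 * (θ * (κ + θ)) + C ^ 2 * (κ + θ) :=
        (norm_le_norm_sub_add _ _).trans (add_le_add hsub hmain)
    _ ≤ 9 * C ^ 2 * (1 * (κ + θ)) + C ^ 2 * (κ + θ) := by gcongr; linarith
    _ = 10 * C ^ 2 * (κ + θ) := by ring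

lemma norm_apply_sub_mul_le (hκ : 0 ≤ κ) (hθ : 0 < θ) (hk : κ + θ ≤ 1) (hC : 1 ≤ C) (hν : 0 < ν)
    (hθν : θ ≤ C * ν) (hℓ : ∀ P, ‖ℓ P - Complex.I * (P 1 0 / (2 * ν) : ℝ)‖ ≤ 4 * ‖P‖)
    (hD : ‖D‖ ≤ C) (hV : ‖V - (κ * θ) • D‖ ≤ C * (θ * (κ + θ)) ^ 2) (hw : ‖w - 1‖ ≤ C * θ) :
    ‖ℓ V - w * (Complex.I * (κ * θ * D 1 0 / (2 * ν) : ℝ))‖ ≤ 10 * C ^ 3 * (θ * (κ + θ)) := by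
  have hsub := norm_apply_sub_le hκ hθ hk hC hν hθν hℓ hD hV
  have hτ := abs_mul_entry_div_le hκ hθ.le (by linarith) hν hθν hD
  set τ := κ * θ * D 1 0 / (2 * ν)
  calc ‖ℓ V - w * (Complex.I * τ)‖ = ‖(ℓ V - Complex.I * τ) - (w - 1) * (Complex.I * τ)‖ := by
        congr 1; ring
    _ ≤ 9 * C ^ 2 * (θ * (κ + θ)) + C * θ * (C ^ 2 * (κ + θ)) := by
        refine norm_sub_le_of_le hsub (norm_mul_le_of_le hw ?_)
        rwa [norm_mul, Complex.norm_I, one_mul, Complex.norm_real]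
    _ ≤ 9 * C ^ 3 * (θ * (κ + θ)) + C * θ * (C ^ 2 * (κ + θ)) := by
        gcongr
        norm_num
    _ = 10 * C ^ 3 * (θ * (κ + θ)) := by ring

end FrameExpansion

section EllipticScale

/-- `g` is an elliptic matrix whose rotation angle and ellipse axis ratio are of order `θ`, with
constants bounded by `C`. The scaling regime near a band edge with `θ` the square root of the
distance to the edge. -/
structure IsEllipticAtScale (g : M₂) (θ C : ℝ) : Prop where
  det_eq_one : g.det = 1
  abs_rotationCos_le_one : |rotationCos g| ≤ 1
  scale_pos : 0 < ellipticScale g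
  scale_le_one : ellipticScale g ≤ 1
  abs_shear_le_scale : |ellipticShear g| ≤ ellipticScale g
  le_mul_scale : θ ≤ C * ellipticScale g
  norm_multiplier_sub_one_le : ‖multiplier g - 1‖ ≤ C * θ
  le_mul_norm_multiplier_sq_sub_one : θ ≤ C * ‖multiplier g ^ 2 - 1‖
  le_mul_norm_multiplier_pow_four_sub_one : θ ≤ C * ‖multiplier g ^ 4 - 1‖

variable {S : Type*} [MeasurableSpace S] {μ : Measure S} [IsProbabilityMeasure μ]
  {T D : S → M₂} {g : M₂} {κ θ C : ℝ}

namespace IsEllipticAtScale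

lemma exists_hasLyapunovExponent_of_clm {F : M₂ˣ} {ℓ ℓ' : M₂ →L[ℝ] ℂ}
    (hg : IsEllipticAtScale g θ C) (hκ : 0 < κ) (hθ : 0 < θ) (hC : 1 ≤ C)
    (hk : 10 * C ^ 3 * (κ + θ) ≤ 1 / 4) (hTm : StronglyMeasurable T)
    (hdet : ∀ s, (T s).det = 1) (hDm : StronglyMeasurable D) (hD : ∀ s, ‖D s‖ ≤ C)
    (hD0 : ∫ s, D s ∂μ = 0)
    (hTD : ∀ s, ‖T s - g - (κ * θ) • D s‖ ≤ C * (θ * (κ + θ)) ^ 2)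
    (hℓ : ∀ P, ‖ℓ P - Complex.I * (P 1 0 / (2 * ellipticScale g) : ℝ)‖ ≤ 4 * ‖P‖)
    (hℓ' : ∀ P, ‖ℓ' P - Complex.I * (P 1 0 / (2 * ellipticScale g) : ℝ)‖ ≤ 4 * ‖P‖)
    (hlin : ∀ s, linPart (F * T s * F⁻¹.val) - multiplier g = ℓ (T s - g))
    (hanti : ∀ s, antilinPart (F * T s * F⁻¹.val) = ℓ' (T s - g)) :
    ∃ γ, HasLyapunovExponent μ (fun s => F * T s * F⁻¹.val) γ ∧
      |γ - (∫ s, (κ * θ * D s 1 0 / (2 * ellipticScale g)) ^ 2 ∂μ) / 2| ≤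
        138 * (10 * C ^ 3) ^ 5 * ((κ + θ) ^ 4 / θ) := by
  have hν := hg.scale_pos
  have hθC := hg.le_mul_scale
  have hC₂ : C ^ 2 ≤ C ^ 3 := pow_le_pow_right₀ hC (by norm_num)
  have hC₃ : C ≤ C ^ 3 := le_self_pow₀ hC (by norm_num)
  have hk₁ : κ + θ ≤ 1 := by nlinarith
  have hθ₁ : θ ≤ 1 := by linarith
  have hVm := hTm.sub (stronglyMeasurable_const (b := g))
  have hτm : StronglyMeasurable fun s => κ * θ * D s 1 0 / (2 * ellipticScale g) :=
    ((continuous_const.mul (continuous_id.matrix_elem 1 0)).div_const _).comp_stronglyMeasurable hDm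
  have hmean : 5 * C ^ 2 * (θ * (κ + θ) ^ 2) ≤ 10 * C ^ 3 * (θ * (κ + θ) ^ 2) := by
    gcongr
    norm_num
  refine exists_hasLyapunovExponent_rotation_of_scales (μ := μ) (w := multiplier g) hκ hθ
    (by linarith) hk ((stronglyMeasurable_const.mul hTm).mul stronglyMeasurable_const)
    (fun s => by rw [Matrix.det_units_conj, hdet s]) hτm
    (norm_multiplier hg.abs_rotationCos_le_one)
    (hg.le_mul_norm_multiplier_sq_sub_one.trans (by gcongr; linarith))
    (hg.le_mul_norm_multiplier_pow_four_sub_one.trans (by gcongr; linarith))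
    (fun s => ?_) (fun s => ?_) (fun s => ?_) (fun s => ?_) (fun s => ?_) ?_ ?_
  · rw [hlin]
    exact (norm_apply_le hκ.le hθ hk₁ hC hν hθC hℓ (hD s) (hTD s)).trans (by gcongr)
  · rw [hanti]
    exact (norm_apply_le hκ.le hθ hk₁ hC hν hθC hℓ' (hD s) (hTD s)).trans (by gcongr)
  · exact (abs_mul_entry_div_le hκ.le hθ.le (by linarith) hν hθC (hD s)).trans
      (by gcongr; linarith)
  · rw [hlin]
    exact norm_apply_sub_mul_le hκ.le hθ hk₁ hC hν hθC hℓ (hD s) (hTD s)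
      hg.norm_multiplier_sub_one_le
  · rw [hanti]
    exact norm_apply_sub_mul_le hκ.le hθ hk₁ hC hν hθC hℓ' (hD s) (hTD s)
      hg.norm_multiplier_sub_one_le
  · simp only [hlin]
    exact (norm_integral_clm_apply_le ℓ hVm hDm hD hD0 fun s =>
      norm_apply_remainder_le hθ hθ₁ hC hν hθC hℓ (hTD s)).trans hmean
  · simp only [hanti]
    exact (norm_integral_clm_apply_le ℓ' hVm hDm hD hD0 fun s =>
      norm_apply_remainder_le hθ hθ₁ hC hν hθC hℓ' (hTD s)).trans hmean

lemma exists_hasLyapunovExponent (hg : IsEllipticAtScale g θ C) (hκ : 0 < κ)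
    (hθ : 0 < θ) (hC : 1 ≤ C) (hk : 10 * C ^ 3 * (κ + θ) ≤ 1 / 4) (hTm : StronglyMeasurable T)
    (hdet : ∀ s, (T s).det = 1) (hDm : StronglyMeasurable D) (hD : ∀ s, ‖D s‖ ≤ C)
    (hD0 : ∫ s, D s ∂μ = 0)
    (hTD : ∀ s, ‖T s - g - (κ * θ) • D s‖ ≤ C * (θ * (κ + θ)) ^ 2) :
    ∃ γ, HasLyapunovExponent μ T γ ∧
      |γ - (∫ s, (κ * θ * D s 1 0 / (2 * ellipticScale g)) ^ 2 ∂μ) / 2| ≤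
        138 * (10 * C ^ 3) ^ 5 * ((κ + θ) ^ 4 / θ) := by
  have hν := hg.scale_pos
  set F := ellipticFrame (ellipticScale g) (ellipticShear g) hν.ne'
  let conjF : M₂ →L[ℝ] M₂ := ContinuousLinearMap.mulLeftRight ℝ M₂ F.val F⁻¹.val
  have hlin (s) : linPart (F * T s * F⁻¹.val) - multiplier g = linPart.comp conjF (T s - g) := by
    rw [← linPart_ellipticFrame_conj_self hg.det_eq_one hg.abs_rotationCos_le_one hν.ne', map_sub]
    rfl
  have hanti (s) : antilinPart (F * T s * F⁻¹.val) = antilinPart.comp conjF (T s - g) := by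
    rw [← sub_zero (antilinPart _), ← antilinPart_ellipticFrame_conj_self hg.det_eq_one
      hg.abs_rotationCos_le_one hν.ne', map_sub]
    rfl
  have hTK (s) : ‖T s‖ ≤ C * (θ * (κ + θ)) ^ 2 + (|κ * θ| * C + ‖g‖) := by
    have hsplit : T s = T s - g - (κ * θ) • D s + ((κ * θ) • D s + g) := by abel
    rw [hsplit]
    refine norm_add_le_of_le (hTD s) (norm_add_le_of_le ?_ le_rfl)
    rw [norm_smul, norm_eq_abs]
    gcongr
    exact hD s
  obtain ⟨γ, hγ, hle⟩ := hg.exists_hasLyapunovExponent_of_clm hκ hθ hC hk hTm hdet hDm hD hD0 hTD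
    (norm_linPart_ellipticFrame_conj_sub_le hν hg.scale_le_one hg.abs_shear_le_scale)
    (norm_antilinPart_ellipticFrame_conj_sub_le hν hg.scale_le_one hg.abs_shear_le_scale)
    hlin hanti
  exact ⟨γ, .of_units_conj (U := MonoidHom.mker (Matrix.detMonoidHom : M₂ →* ℝ)) hTm hTK hdet
    (fun P hP => one_le_norm_of_det_eq_one hP) F hγ, hle⟩

end IsEllipticAtScale

end EllipticScale

section ParabolicLimit

open Asymptotics

lemma tendsto_div_pow_zero {f : ℝ → ℝ} {m n : ℕ} (hmn : n < m)
    (hf : f =O[nhdsWithin 0 (Ioi 0)] fun θ => θ ^ m) :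
    Tendsto (fun θ => f θ / θ ^ n) (nhdsWithin 0 (Ioi 0)) (nhds 0) :=
  (hf.trans_isLittleO ((isLittleO_pow_pow hmn).mono nhdsWithin_le_nhds)).tendsto_div_nhds_zero

/-- The family `g θ` of unimodular matrices approaches a Jordan block as `θ → 0`: the distance to
the block is of order `θ ^ 2`, and the defect `2 - trace` of the trace is `q θ ^ 2` to leading
order. The matrices are elliptic if `q > 0`. -/
structure HasParabolicLimit (g : ℝ → M₂) (q : ℝ) : Prop where
  det_eq_one : ∀ᶠ θ in nhdsWithin 0 (Ioi 0), (g θ).det = 1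
  isBigO_sub : (fun θ => g θ - !![1, 1; 0, 1]) =O[nhdsWithin 0 (Ioi 0)] fun θ => θ ^ 2
  isBigO_trace : (fun θ => 2 - (g θ).trace - q * θ ^ 2) =O[nhdsWithin 0 (Ioi 0)] fun θ => θ ^ 4

namespace HasParabolicLimit

variable {g : ℝ → M₂} {q : ℝ}

lemma isBigO_apply_sub (hg : HasParabolicLimit g q) (i j : Fin 2) :
    (fun θ => g θ i j - !![1, 1; 0, 1] i j) =O[nhdsWithin 0 (Ioi 0)] fun θ => θ ^ 2 :=
  (IsBigO.of_bound' (Eventually.of_forall fun θ =>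
    abs_apply_le_norm (g θ - !![1, 1; 0, 1]) i j)).trans hg.isBigO_sub

lemma tendsto_apply (hg : HasParabolicLimit g q) (i j : Fin 2) :
    Tendsto (fun θ => g θ i j) (nhdsWithin 0 (Ioi 0)) (nhds (!![1, 1; 0, 1] i j)) :=
  tendsto_sub_nhds_zero_iff.mp <| by
    simpa only [pow_zero, div_one] using tendsto_div_pow_zero two_pos (hg.isBigO_apply_sub i j)

lemma tendsto_trace_defect_div (hg : HasParabolicLimit g q) :
    Tendsto (fun θ => (2 - (g θ).trace) / θ ^ 2) (nhdsWithin 0 (Ioi 0)) (nhds q) := by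
  refine tendsto_sub_nhds_zero_iff.mp
    ((tendsto_div_pow_zero (n := 2) (by norm_num) hg.isBigO_trace).congr' ?_)
  filter_upwards [self_mem_nhdsWithin] with θ hθ
  rw [sub_div, mul_div_cancel_right₀ q (pow_pos (mem_Ioi.mp hθ) 2).ne']

lemma tendsto_rotationCos (hg : HasParabolicLimit g q) :
    Tendsto (fun θ => rotationCos (g θ)) (nhdsWithin 0 (Ioi 0)) (nhds 1) := by
  simpa [rotationCos, Matrix.trace_fin_two, one_add_one_eq_two] using
    ((hg.tendsto_apply 0 0).add (hg.tendsto_apply 1 1)).div_const 2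

lemma eventually_trace_lt_two (hg : HasParabolicLimit g q) (hq : 0 < q) :
    ∀ᶠ θ in nhdsWithin 0 (Ioi 0), (g θ).trace < 2 := by
  filter_upwards [self_mem_nhdsWithin, hg.tendsto_trace_defect_div.eventually_const_lt hq]
    with θ hθ h
  simpa [div_pos_iff_of_pos_right (pow_pos (mem_Ioi.mp hθ) 2)] using h

lemma eventually_abs_rotationCos_le_one (hg : HasParabolicLimit g q) (hq : 0 < q) :
    ∀ᶠ θ in nhdsWithin 0 (Ioi 0), |rotationCos (g θ)| ≤ 1 := by
  filter_upwards [hg.eventually_trace_lt_two hq,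
    hg.tendsto_rotationCos.eventually_const_lt (neg_one_lt_zero.trans one_pos)] with θ htr hcos
  exact abs_le.mpr ⟨hcos.le, by rw [rotationCos]; linarith⟩

lemma tendsto_rotationSin_div (hg : HasParabolicLimit g q) :
    Tendsto (fun θ => rotationSin (g θ) / θ) (nhdsWithin 0 (Ioi 0)) (nhds (√q)) := by
  have h := (hg.tendsto_trace_defect_div.mul (hg.tendsto_rotationCos.const_add 1)).div_const 2
  rw [one_add_one_eq_two, mul_div_cancel_right₀ q two_ne_zero] at h
  refine h.sqrt.congr' ?_
  filter_upwards [self_mem_nhdsWithin] with θ hθ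
  have hθ := mem_Ioi.mp hθ
  rw [rotationSin, ← sqrt_sq hθ.le, ← sqrt_div' _ (sq_nonneg θ), sqrt_sq hθ.le]
  congr 1
  simp only [rotationCos]
  field_simp
  ring

lemma tendsto_ellipticScale_div (hg : HasParabolicLimit g q) :
    Tendsto (fun θ => ellipticScale (g θ) / θ) (nhdsWithin 0 (Ioi 0)) (nhds (√q)) := by
  simpa [ellipticScale, div_right_comm, Pi.div_def] using
    hg.tendsto_rotationSin_div.div (hg.tendsto_apply 0 1) (by simp)

lemma tendsto_ellipticShear_div (hg : HasParabolicLimit g q) :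
    Tendsto (fun θ => ellipticShear (g θ) / θ) (nhdsWithin 0 (Ioi 0)) (nhds 0) := by
  have hdiag := tendsto_div_pow_zero (n := 1) (by norm_num)
    ((hg.isBigO_apply_sub 0 0).sub (hg.isBigO_apply_sub 1 1))
  simpa [ellipticShear, div_right_comm, Pi.div_def] using
    hdiag.div ((hg.tendsto_apply 0 1).const_mul 2) (by simp)

lemma tendsto_norm_multiplier_sub_one_div (hg : HasParabolicLimit g q) (hq : 0 < q) :
    Tendsto (fun θ => ‖multiplier (g θ) - 1‖ / θ) (nhdsWithin 0 (Ioi 0)) (nhds (√q)) := by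
  refine hg.tendsto_trace_defect_div.sqrt.congr' ?_
  filter_upwards [self_mem_nhdsWithin, hg.eventually_abs_rotationCos_le_one hq] with θ hθ hcos
  rw [← norm_multiplier_sub_one_sq hcos, ← div_pow,
    sqrt_sq (div_nonneg (norm_nonneg _) (mem_Ioi.mp hθ).le)]

lemma tendsto_norm_multiplier_sq_sub_one_div (hg : HasParabolicLimit g q) (hq : 0 < q) :
    Tendsto (fun θ => ‖multiplier (g θ) ^ 2 - 1‖ / θ) (nhdsWithin 0 (Ioi 0)) (nhds (2 * √q)) := by
  refine (hg.tendsto_rotationSin_div.const_mul 2).congr' ?_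
  filter_upwards [hg.eventually_abs_rotationCos_le_one hq] with θ hcos
  rw [norm_multiplier_sq_sub_one hcos, mul_div_assoc]

lemma tendsto_norm_multiplier_pow_four_sub_one_div (hg : HasParabolicLimit g q) (hq : 0 < q) :
    Tendsto (fun θ => ‖multiplier (g θ) ^ 4 - 1‖ / θ) (nhdsWithin 0 (Ioi 0)) (nhds (4 * √q)) := by
  have h := (hg.tendsto_rotationCos.abs.const_mul 4).mul hg.tendsto_rotationSin_div
  rw [abs_one, mul_one] at h
  refine h.congr' ?_
  filter_upwards [hg.eventually_abs_rotationCos_le_one hq] with θ hcos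
  rw [norm_multiplier_pow_four_sub_one hcos, mul_div_assoc]

lemma eventually_isEllipticAtScale (hg : HasParabolicLimit g q) (hq : 0 < q) {C : ℝ}
    (hC : √q < C) (hC' : C⁻¹ < √q) :
    ∀ᶠ θ in nhdsWithin 0 (Ioi 0), IsEllipticAtScale (g θ) θ C := by
  have hq' : 0 < √q := sqrt_pos.mpr hq
  have hC0 : 0 < C := hq'.trans hC
  have hscale : Tendsto (fun θ => ellipticScale (g θ)) (nhdsWithin 0 (Ioi 0)) (nhds 0) := by
    have hθ := tendsto_nhdsWithin_of_tendsto_nhds (s := Ioi 0) (tendsto_id (x := nhds (0 : ℝ)))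
    refine ((hg.tendsto_ellipticScale_div.mul hθ).congr' ?_).trans (by simp)
    filter_upwards [self_mem_nhdsWithin] with θ hθ
    exact div_mul_cancel₀ _ (mem_Ioi.mp hθ).ne'
  have hle {θ z : ℝ} (hθ : 0 < θ) (hz : C⁻¹ < z / θ) : θ ≤ C * z := by
    rw [lt_div_iff₀ hθ, inv_mul_lt_iff₀ hC0] at hz
    exact hz.le
  filter_upwards [self_mem_nhdsWithin, hg.det_eq_one, hg.eventually_abs_rotationCos_le_one hq,
    hscale.eventually_le_const one_pos, hg.tendsto_ellipticScale_div.eventually_const_lt hC',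
    hg.tendsto_ellipticShear_div.abs.eventually_lt hg.tendsto_ellipticScale_div (by simpa),
    (hg.tendsto_norm_multiplier_sub_one_div hq).eventually_lt_const hC,
    (hg.tendsto_norm_multiplier_sq_sub_one_div hq).eventually_const_lt
      (show C⁻¹ < 2 * √q by linarith),
    (hg.tendsto_norm_multiplier_pow_four_sub_one_div hq).eventually_const_lt
      (show C⁻¹ < 4 * √q by linarith)] with θ hθ hdet hcos hν₁ hν hm hw hw₂ hw₄
  have hθ := mem_Ioi.mp hθ
  have hθν := hle hθ hν
  rw [abs_div, abs_of_pos hθ, div_lt_div_iff_of_pos_right hθ] at hm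
  exact ⟨hdet, hcos, pos_of_mul_pos_right (hθ.trans_le hθν) hC0.le, hν₁, hm.le, hθν,
    ((div_lt_iff₀ hθ).mp hw).le, hle hθ hw₂, hle hθ hw₄⟩

lemma isBigO_rotationSin_sq_sub (hg : HasParabolicLimit g q) (hq : 0 < q) :
    (fun θ => rotationSin (g θ) ^ 2 - q * θ ^ 2 * g θ 0 1 ^ 2)
      =O[nhdsWithin 0 (Ioi 0)] fun θ => θ ^ 4 := by
  have hdefect : (fun θ => 2 - (g θ).trace) =O[nhdsWithin 0 (Ioi 0)] fun θ => θ ^ 2 :=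
    isBigO_of_div_tendsto_nhds (by
      filter_upwards [self_mem_nhdsWithin] with θ hθ h
      exact absurd h (pow_pos (mem_Ioi.mp hθ) 2).ne') q hg.tendsto_trace_defect_div
  have hentry :
      (fun θ => q * θ ^ 2 * (g θ 0 1 ^ 2 - 1)) =O[nhdsWithin 0 (Ioi 0)] fun θ => θ ^ 4 := by
    have h := ((isBigO_refl (fun θ : ℝ => θ ^ 2) _).const_mul_left q).mul
      ((hg.isBigO_apply_sub 0 1).mul (((hg.tendsto_apply 0 1).add_const 1).isBigO_one ℝ))
    refine h.congr (fun θ => ?_) fun θ => ?_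
    · change q * θ ^ 2 * ((g θ 0 1 - 1) * (g θ 0 1 + 1)) = _
      ring
    · ring
  have hsq := (hdefect.mul hdefect).const_mul_left (1 / 4)
  refine ((hg.isBigO_trace.sub (hsq.congr_right fun θ => (pow_add θ 2 2).symm)).sub
    hentry).congr' ?_
    EventuallyEq.rfl
  filter_upwards [hg.eventually_abs_rotationCos_le_one hq] with θ hcos
  rw [rotationSin_sq hcos, rotationCos]
  ring

lemma isBigO_sq_div_ellipticScale_sub (hg : HasParabolicLimit g q) (hq : 0 < q) :
    (fun θ => (θ / ellipticScale (g θ)) ^ 2 - 1 / q) =O[nhdsWithin 0 (Ioi 0)] fun θ => θ ^ 2 := by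
  have hsin := hg.tendsto_rotationSin_div.eventually_ne (sqrt_pos.mpr hq).ne'
  have hinv := (((hg.tendsto_rotationSin_div.inv₀ (sqrt_pos.mpr hq).ne').pow 2).isBigO_one
    ℝ).const_mul_left (-1 / q)
  refine (hinv.mul ((hg.isBigO_rotationSin_sq_sub hq).mul
    (isBigO_refl (fun θ : ℝ => (θ ^ 2)⁻¹) _))).congr' ?_ ?_
  · filter_upwards [self_mem_nhdsWithin, hsin] with θ hθ hsin
    have hθ := (mem_Ioi.mp hθ).ne'
    have hsin := (div_ne_zero_iff.mp hsin).1
    rw [ellipticScale]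
    field_simp
    ring
  · filter_upwards [self_mem_nhdsWithin] with θ hθ
    have hθ := (mem_Ioi.mp hθ).ne'
    field_simp

end HasParabolicLimit

end ParabolicLimit

section UnimodularJet

open Asymptotics

lemma abs_trace_le_two_mul_norm (P : M₂) : |P.trace| ≤ 2 * ‖P‖ := by
  rw [Matrix.trace_fin_two, two_mul]
  exact (abs_add_le _ _).trans (add_le_add (abs_apply_le_norm P 0 0) (abs_apply_le_norm P 1 1))

lemma hasDerivAt_trace {G : ℝ → M₂} {A : M₂} {t : ℝ} (hG : HasDerivAt G A t) :
    HasDerivAt (fun u => (G u).trace) A.trace t :=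
  (Matrix.traceLinearMap (Fin 2) ℝ ℝ).toContinuousLinearMap.hasFDerivAt.comp_hasDerivAt t hG

lemma hasDerivAt_matrix_apply {G : ℝ → M₂} {A : M₂} {t : ℝ} (hG : HasDerivAt G A t) (i j : Fin 2) :
    HasDerivAt (fun u => G u i j) (A i j) t :=
  (Matrix.entryLinearMap ℝ ℝ i j).toContinuousLinearMap.hasFDerivAt.comp_hasDerivAt t hG

lemma trace_adjugate_mul_eq_zero {G : ℝ → M₂} {A : M₂} {t : ℝ} (hG : HasDerivAt G A t)
    (hdet : ∀ᶠ u in nhds t, (G u).det = 1) : ((G t).adjugate * A).trace = 0 := by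
  have hentry := hasDerivAt_matrix_apply hG
  have hderiv := ((hentry 0 0).mul (hentry 1 1)).sub ((hentry 0 1).mul (hentry 1 0))
  have hconst := (hasDerivAt_const t (1 : ℝ)).congr_of_eventuallyEq hdet
  simp only [Matrix.det_fin_two] at hconst
  have hzero := hderiv.unique hconst
  simp only [Matrix.adjugate_fin_two, Matrix.trace_fin_two, Matrix.mul_apply, Fin.sum_univ_two,
    Matrix.of_apply, Matrix.cons_val', Matrix.cons_val_zero, Matrix.cons_val_one,
    Matrix.cons_val_fin_one]
  linarith

lemma exists_units_conj_eq_jordan {P : M₂} (hdet : P.det = 1) (htr : P.trace = 2) (hP : P ≠ 1) :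
    ∃ M : M₂ˣ, M.val * P * M⁻¹.val = !![1, 1; 0, 1] := by
  suffices h : ∃ Q : M₂ˣ, P * Q.val = Q.val * !![1, 1; 0, 1] by
    obtain ⟨Q, hQ⟩ := h
    exact ⟨Q⁻¹, by rw [inv_inv, mul_assoc, hQ, Units.inv_mul_cancel_left]⟩
  rw [Matrix.det_fin_two] at hdet
  rw [Matrix.trace_fin_two] at htr
  by_cases hc : P 1 0 = 0
  · rw [hc, mul_zero, sub_zero] at hdet
    have ha : P 0 0 = 1 := by
      rw [← sub_eq_zero, ← sq_eq_zero_iff]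
      linear_combination (-1 : ℝ) * hdet + P 0 0 * htr
    have hd : P 1 1 = 1 := by linarith
    have hb : P 0 1 ≠ 0 := fun hb => hP <| by
      rw [Matrix.eta_fin_two P, ha, hb, hc, hd, Matrix.one_fin_two]
    refine ⟨Matrix.GeneralLinearGroup.mkOfDetNeZero !![P 0 1, 0; 0, 1] (by simpa), ?_⟩
    change P * !![P 0 1, 0; 0, 1] = !![P 0 1, 0; 0, 1] * !![1, 1; 0, 1]
    nth_rw 1 [Matrix.eta_fin_two P]
    simp [ha, hc, hd]
  · refine ⟨Matrix.GeneralLinearGroup.mkOfDetNeZero !![P 0 0 - 1, 1; P 1 0, 0] (by simpa), ?_⟩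
    change P * !![P 0 0 - 1, 1; P 1 0, 0] = !![P 0 0 - 1, 1; P 1 0, 0] * !![1, 1; 0, 1]
    nth_rw 1 [Matrix.eta_fin_two P]
    have hd : P 1 1 = 2 - P 0 0 := by linarith
    rw [hd] at hdet ⊢
    ext i j
    fin_cases i <;> fin_cases j <;> simp <;> linarith

variable {S : Type*} [MeasurableSpace S] {μ : Measure S} {T : ℝ × ℝ → S → M₂} {T₀ A : M₂}
  {D : S → M₂}

lemma HasCenteredJet.exists_norm_sub_le {A : Type*} [NormedRing A] [NormedAlgebra ℝ A]
    {f : ℝ × ℝ → S → A} {f₀ f₁ : A} {D : S → A} (hf : HasCenteredJet μ f f₀ f₁ D) :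
    ∃ c, ∀ᶠ p in nhds 0, ∀ s, ‖f p s - f (0, p.2) s - p.1 • D s‖ ≤ c * ‖p‖ ^ 2 := by
  have hsnd : Tendsto (fun q : (ℝ × ℝ) × S => (((0 : ℝ), q.1.2), q.2)) (nhds 0 ×ˢ ⊤)
      (nhds 0 ×ˢ ⊤) :=
    ((Continuous.tendsto' (f := fun p : ℝ × ℝ => ((0 : ℝ), p.2)) (by fun_prop) 0 0 rfl).comp
      tendsto_fst).prodMk tendsto_top
  have hle : (fun q : (ℝ × ℝ) × S => ‖((0 : ℝ), q.1.2)‖ ^ 2) =O[nhds 0 ×ˢ ⊤]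
      fun q => ‖q.1‖ ^ 2 :=
    (IsBigO.of_bound 1 (Eventually.of_forall fun q => by
      simp [Prod.norm_def, abs_of_nonneg])).pow 2
  obtain ⟨c, hc⟩ := (hf.isBigO.sub ((hf.isBigO.comp_tendsto hsnd).trans hle)).bound
  refine ⟨c, ?_⟩
  filter_upwards [mem_prod_top.mp hc] with p hp s
  have h := hp s
  simp only [Function.comp_apply, zero_smul, add_zero, norm_pow, norm_norm] at h
  refine (congrArg norm ?_).trans_le h
  abel

/-- The random unimodular matrices `T (λ, e)` do not depend on the randomness at `λ = 0` and have
the first-order expansion `T₀ + e A + λ D` at `(0, 0)`. The transfer matrices over a unit cell have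
this property, with `e` the distance of the energy to the band edge. -/
structure HasUnimodularJet (μ : Measure S) (T : ℝ × ℝ → S → M₂) (T₀ A : M₂) (D : S → M₂) : Prop
    extends HasCenteredJet μ T T₀ A D where
  stronglyMeasurable_apply : ∀ p, StronglyMeasurable (T p)
  eventually_det_eq_one : ∀ᶠ p in nhds 0, ∀ s, (T p s).det = 1
  apply_zero_fst : ∀ e s s', T (0, e) s = T (0, e) s'

namespace HasUnimodularJet

lemma hasDerivAt_trace_energy (hT : HasUnimodularJet μ T T₀ A D) (s : S) :
    HasDerivAt (fun e => (T (0, e) s).trace) A.trace 0 :=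
  hasDerivAt_trace (hT.hasDerivAt_energy s)

lemma hasDerivAt_trace_disorder (hT : HasUnimodularJet μ T T₀ A D) (s : S) :
    HasDerivAt (fun l => (T (l, 0) s).trace) (D s).trace 0 :=
  hasDerivAt_trace (hT.hasDerivAt_disorder s)

lemma trace_adjugate_mul_energy (hT : HasUnimodularJet μ T T₀ A D) (s : S) :
    (T₀.adjugate * A).trace = 0 := by
  have hline : Tendsto (fun e : ℝ => ((0 : ℝ), e)) (nhds 0) (nhds 0) :=
    Continuous.tendsto' (by fun_prop) 0 0 rfl
  simpa only [Prod.mk_zero_zero, hT.apply_zero] using trace_adjugate_mul_eq_zero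
    (hT.hasDerivAt_energy s) ((hline.eventually hT.eventually_det_eq_one).mono fun e h => h s)

lemma trace_adjugate_mul_disorder (hT : HasUnimodularJet μ T T₀ A D) (s : S) :
    (T₀.adjugate * D s).trace = 0 := by
  have hline : Tendsto (fun l : ℝ => (l, (0 : ℝ))) (nhds 0) (nhds 0) :=
    Continuous.tendsto' (by fun_prop) 0 0 rfl
  simpa only [Prod.mk_zero_zero, hT.apply_zero] using trace_adjugate_mul_eq_zero
    (hT.hasDerivAt_disorder s) ((hline.eventually hT.eventually_det_eq_one).mono fun l h => h s)

lemma det_eq_one (hT : HasUnimodularJet μ T T₀ A D) (s : S) : T₀.det = 1 :=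
  hT.apply_zero s ▸ hT.eventually_det_eq_one.self_of_nhds s

lemma hasParabolicLimit {ε : ℝ} (hT : HasUnimodularJet μ T !![1, 1; 0, 1] A D) (s : S) :
    HasParabolicLimit (fun θ => T (0, ε * θ ^ 2) s) (-(ε * A.trace)) := by
  have hcurve : Tendsto (fun θ : ℝ => ((0 : ℝ), ε * θ ^ 2)) (nhds 0) (nhds 0) :=
    Continuous.tendsto' (by fun_prop) 0 0 (by simp)
  have hjet : (fun θ => T (0, ε * θ ^ 2) s - !![1, 1; 0, 1] - (ε * θ ^ 2) • A)
      =O[nhdsWithin 0 (Ioi 0)] fun θ => θ ^ 4 := by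
    have h := ((hT.isBigO_nhds s).comp_tendsto hcurve).mono (nhdsWithin_le_nhds (s := Ioi 0))
    have hpow : (fun θ : ℝ => ‖((0 : ℝ), ε * θ ^ 2) - 0‖ ^ 2) =O[nhdsWithin 0 (Ioi 0)]
        fun θ => θ ^ 4 :=
      .of_bound (‖ε‖ ^ 2) (Eventually.of_forall fun θ => le_of_eq <| by
        rw [sub_zero, Prod.norm_mk, norm_zero, max_eq_right (norm_nonneg _), norm_pow, norm_norm,
          norm_mul, mul_pow, ← norm_pow (θ ^ 2), ← pow_mul])
    refine (h.trans hpow).congr_left fun θ => ?_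
    simp [sub_sub]
  have hquad : (fun θ : ℝ => θ ^ 4) =O[nhdsWithin 0 (Ioi 0)] fun θ => θ ^ 2 :=
    (isLittleO_pow_pow (by norm_num)).isBigO.mono nhdsWithin_le_nhds
  refine ⟨?_, ?_, ?_⟩
  · exact ((hcurve.mono_left nhdsWithin_le_nhds).eventually hT.eventually_det_eq_one).mono
      fun θ h => h s
  · have hlin : (fun θ : ℝ => (ε * θ ^ 2) • A) =O[nhdsWithin 0 (Ioi 0)] fun θ => θ ^ 2 := by
      refine .of_bound (‖ε‖ * ‖A‖) (Eventually.of_forall fun θ => le_of_eq ?_)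
      rw [norm_smul, norm_mul, mul_right_comm]
    exact ((hjet.trans hquad).add hlin).congr_left fun θ => sub_add_cancel _ _
  · have htr : (fun θ => (T (0, ε * θ ^ 2) s - !![1, 1; 0, 1] - (ε * θ ^ 2) • A).trace)
        =O[nhdsWithin 0 (Ioi 0)] fun θ => T (0, ε * θ ^ 2) s - !![1, 1; 0, 1] - (ε * θ ^ 2) • A :=
      .of_bound 2 (Eventually.of_forall fun θ => abs_trace_le_two_mul_norm _)
    refine (htr.trans hjet).neg_left.congr_left fun θ => ?_
    simp only [Matrix.trace_sub, Matrix.trace_smul, Matrix.trace_fin_two_of, smul_eq_mul]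
    ring

end HasUnimodularJet

end UnimodularJet

section EllipticScaling

open Asymptotics

variable {S : Type*} [MeasurableSpace S] {μ : Measure S}

/-- The Lyapunov exponent of the random matrices `T (λ, e)` is `B κ ^ 2 + O(θ ^ 3 + κ ^ 4 / θ)` at
`λ = κ θ` and `e = ε θ ^ 2`, jointly as `κ, θ → 0`. For the transfer matrices `θ` is of the order of
the rotation angle and `κ` is the ratio of the disorder strength to it. -/
def HasEllipticScaling {A : Type*} [NormedRing A] (μ : Measure S) (T : ℝ × ℝ → S → A)
    (ε B : ℝ) : Prop :=
  ∃ C, ∀ᶠ p : ℝ × ℝ in nhdsWithin 0 (Ioi 0 ×ˢ Ioi 0),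
    ∃ γ, HasLyapunovExponent μ (T (p.1 * p.2, ε * p.2 ^ 2)) γ ∧
      |γ - B * p.1 ^ 2| ≤ C * (p.2 ^ 3 + p.1 ^ 4 / p.2)

lemma tendsto_scaling_curve (ε : ℝ) :
    Tendsto (fun p : ℝ × ℝ => (p.1 * p.2, ε * p.2 ^ 2))
      (nhdsWithin 0 (Ioi 0 ×ˢ Ioi 0)) (nhds 0) :=
  (Continuous.tendsto' (by fun_prop) 0 0 (by simp)).mono_left nhdsWithin_le_nhds

lemma tendsto_snd_nhdsGT :
    Tendsto Prod.snd (nhdsWithin (0 : ℝ × ℝ) (Ioi 0 ×ˢ Ioi 0)) (nhdsWithin 0 (Ioi 0)) :=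
  continuous_snd.continuousWithinAt.tendsto_nhdsWithin fun _ hp => hp.2

lemma HasEllipticScaling.of_imp {A : Type*} [NormedRing A] {T T' : ℝ × ℝ → S → A} {ε B : ℝ}
    (h : HasEllipticScaling μ T ε B)
    (himp : ∀ᶠ p in nhds 0, ∀ γ, HasLyapunovExponent μ (T p) γ → HasLyapunovExponent μ (T' p) γ) :
    HasEllipticScaling μ T' ε B := by
  obtain ⟨C, hγ⟩ := h
  refine ⟨C, ?_⟩
  filter_upwards [hγ, (tendsto_scaling_curve ε).eventually himp] with p ⟨γ, hγ, hle⟩ himp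
  exact ⟨γ, himp γ hγ, hle⟩

lemma add_pow_four_div_le {κ θ : ℝ} (hκ : 0 ≤ κ) (hθ : 0 < θ) :
    (κ + θ) ^ 4 / θ ≤ 8 * (θ ^ 3 + κ ^ 4 / θ) :=
  calc (κ + θ) ^ 4 / θ ≤ 2 ^ (4 - 1) * (κ ^ 4 + θ ^ 4) / θ := by
        gcongr
        exact add_pow_le hκ hθ.le 4
    _ = 8 * (θ ^ 3 + κ ^ 4 / θ) := by
      field_simp
      ring

lemma abs_sub_le_of_scale_sq {κ θ γ ρ V q K c : ℝ} (hκ : 0 < κ) (hθ : 0 < θ) (hθ₁ : θ ≤ 1)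
    (hV : 0 ≤ V) (hγ : |γ - κ ^ 2 * ρ * V / 8| ≤ K * ((κ + θ) ^ 4 / θ))
    (hρ : |ρ - 1 / q| ≤ c * θ ^ 2) :
    |γ - V / (8 * q) * κ ^ 2| ≤ 8 * (K + V * c) * (θ ^ 3 + κ ^ 4 / θ) := by
  have hc : 0 ≤ c := nonneg_of_mul_nonneg_left ((abs_nonneg _).trans hρ) (by positivity)
  have hK : 0 ≤ K := nonneg_of_mul_nonneg_left ((abs_nonneg _).trans hγ) (by positivity)
  have herror : κ ^ 2 * θ ^ 2 ≤ (κ + θ) ^ 4 / θ := by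
    rw [le_div_iff₀ hθ]
    calc κ ^ 2 * θ ^ 2 * θ ≤ κ ^ 2 * θ ^ 2 * 1 := by gcongr
      _ ≤ (κ + θ) ^ 2 * (κ + θ) ^ 2 := by
        rw [mul_one]
        gcongr <;> linarith
      _ = (κ + θ) ^ 4 := by ring
  have hmain : |κ ^ 2 * ρ * V / 8 - V / (8 * q) * κ ^ 2| ≤ V * c * ((κ + θ) ^ 4 / θ) := by
    have hfactor : κ ^ 2 * ρ * V / 8 - V / (8 * q) * κ ^ 2 = V * κ ^ 2 / 8 * (ρ - 1 / q) := by ring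
    calc |κ ^ 2 * ρ * V / 8 - V / (8 * q) * κ ^ 2| = V * κ ^ 2 / 8 * |ρ - 1 / q| := by
          rw [hfactor, abs_mul, abs_of_nonneg (by positivity)]
      _ ≤ V * κ ^ 2 / 1 * (c * θ ^ 2) := by
        gcongr
        norm_num
      _ = V * c * (κ ^ 2 * θ ^ 2) := by ring
      _ ≤ V * c * ((κ + θ) ^ 4 / θ) := by gcongr
  calc |γ - V / (8 * q) * κ ^ 2| ≤ (K + V * c) * ((κ + θ) ^ 4 / θ) := by
        rw [add_mul]
        exact (abs_sub_le _ _ _).trans (add_le_add hγ hmain)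
    _ ≤ (K + V * c) * (8 * (θ ^ 3 + κ ^ 4 / θ)) := by
        gcongr
        exact add_pow_four_div_le hκ.le hθ
    _ = 8 * (K + V * c) * (θ ^ 3 + κ ^ 4 / θ) := by ring

namespace HasUnimodularJet

variable {T : ℝ × ℝ → S → M₂} {T₀ A : M₂} {D : S → M₂} {ε : ℝ}

lemma exists_norm_sub_le_scale (hT : HasUnimodularJet μ T T₀ A D) (ε : ℝ) :
    ∃ c, ∀ᶠ p : ℝ × ℝ in nhdsWithin 0 (Ioi 0 ×ˢ Ioi 0), ∀ s,
      ‖T (p.1 * p.2, ε * p.2 ^ 2) s - T (0, ε * p.2 ^ 2) s - (p.1 * p.2) • D s‖ ≤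
        c * (p.2 * (p.1 + p.2)) ^ 2 := by
  obtain ⟨c, hc⟩ := hT.exists_norm_sub_le
  refine ⟨|c| * (1 + |ε|) ^ 2, ?_⟩
  filter_upwards [(tendsto_scaling_curve ε).eventually hc, self_mem_nhdsWithin]
    with p hp ⟨hκ, hθ⟩ s
  rw [mem_Ioi] at hκ hθ
  have hnorm : ‖(p.1 * p.2, ε * p.2 ^ 2)‖ ≤ (1 + |ε|) * (p.2 * (p.1 + p.2)) := by
    refine norm_prod_le_iff.mpr ⟨?_, ?_⟩
    · rw [norm_of_nonneg (by positivity)]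
      nlinarith [abs_nonneg ε, mul_pos hκ hθ, mul_pos hθ hθ]
    · rw [norm_mul, norm_eq_abs, norm_of_nonneg (by positivity)]
      nlinarith [abs_nonneg ε, mul_pos hκ hθ, mul_pos hθ hθ,
        mul_nonneg (abs_nonneg ε) (mul_pos hκ hθ).le]
  calc _ ≤ c * ‖(p.1 * p.2, ε * p.2 ^ 2)‖ ^ 2 := hp s
    _ ≤ |c| * ((1 + |ε|) * (p.2 * (p.1 + p.2))) ^ 2 := by gcongr; exact le_abs_self c
    _ = |c| * (1 + |ε|) ^ 2 * (p.2 * (p.1 + p.2)) ^ 2 := by ring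

lemma trace_disorder_eq_of_jordan (hT : HasUnimodularJet μ T !![1, 1; 0, 1] A D) (s : S) :
    (D s).trace = D s 1 0 := by
  have h := hT.trace_adjugate_mul_disorder s
  rw [Matrix.adjugate_fin_two_of, Matrix.eta_fin_two (D s), Matrix.mul_fin_two,
    Matrix.trace_fin_two_of] at h
  rw [Matrix.trace_fin_two]
  linarith

variable [IsProbabilityMeasure μ]

lemma exists_hasLyapunovExponent_near_jordan (hT : HasUnimodularJet μ T !![1, 1; 0, 1] A D)
    (hε : ε * A.trace < 0) (s₀ : S) :
    ∃ K, ∀ᶠ p : ℝ × ℝ in nhdsWithin 0 (Ioi 0 ×ˢ Ioi 0),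
      ∃ γ, HasLyapunovExponent μ (T (p.1 * p.2, ε * p.2 ^ 2)) γ ∧
        |γ - (∫ s, (p.1 * p.2 * D s 1 0 /
          (2 * ellipticScale (T (0, ε * p.2 ^ 2) s₀))) ^ 2 ∂μ) / 2| ≤
          K * ((p.1 + p.2) ^ 4 / p.2) := by
  have hq : 0 < √(-(ε * A.trace)) := sqrt_pos.mpr (by linarith)
  obtain ⟨c, hc⟩ := hT.exists_norm_sub_le_scale ε
  obtain ⟨d, hd⟩ := hT.exists_norm_le
  obtain ⟨C, hC, hcC, hdC, hqC, hqC'⟩ := ((eventually_ge_atTop 1).and <|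
    (eventually_ge_atTop c).and <| (eventually_ge_atTop d).and <| (eventually_gt_atTop _).and <|
      tendsto_inv_atTop_zero.eventually_lt_const hq).exists
  have hsmall : ∀ᶠ p : ℝ × ℝ in nhdsWithin 0 (Ioi 0 ×ˢ Ioi 0),
      10 * C ^ 3 * (p.1 + p.2) ≤ 1 / 4 :=
    ((Continuous.tendsto' (by fun_prop) 0 0 (by simp)).mono_left
      nhdsWithin_le_nhds).eventually_le_const (by norm_num)
  refine ⟨138 * (10 * C ^ 3) ^ 5, ?_⟩
  filter_upwards [hc, hsmall, (tendsto_scaling_curve ε).eventually hT.eventually_det_eq_one,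
    tendsto_snd_nhdsGT.eventually
      ((hT.hasParabolicLimit s₀).eventually_isEllipticAtScale (by linarith) hqC hqC'),
    self_mem_nhdsWithin] with p hTD hk hdet hg ⟨hκ, hθ⟩
  refine hg.exists_hasLyapunovExponent hκ hθ hC hk (hT.stronglyMeasurable_apply _) hdet
    hT.stronglyMeasurable (fun s => (hd s).trans hdC) hT.integral_eq_zero fun s => ?_
  rw [hT.apply_zero_fst _ s₀ s]
  exact (hTD s).trans (by gcongr)

lemma hasEllipticScaling_of_jordan (hT : HasUnimodularJet μ T !![1, 1; 0, 1] A D)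
    (hε : ε * A.trace < 0) :
    HasEllipticScaling μ T ε ((∫ s, (D s).trace ^ 2 ∂μ) / (8 * |ε * A.trace|)) := by
  obtain ⟨s₀⟩ := nonempty_of_isProbabilityMeasure μ
  have hq : 0 < -(ε * A.trace) := by linarith
  obtain ⟨K, hK⟩ := hT.exists_hasLyapunovExponent_near_jordan hε s₀
  obtain ⟨c, hc⟩ := ((hT.hasParabolicLimit s₀).isBigO_sq_div_ellipticScale_sub hq).bound
  have hθ₁ := tendsto_snd_nhdsGT.eventually (nhdsWithin_le_nhds (Iic_mem_nhds one_pos))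
  rw [abs_of_neg hε]
  refine ⟨8 * (K + (∫ s, (D s).trace ^ 2 ∂μ) * c), ?_⟩
  filter_upwards [hK, tendsto_snd_nhdsGT.eventually hc, hθ₁, self_mem_nhdsWithin]
    with ⟨κ, θ⟩ ⟨γ, hγ, hle⟩ hscale hθ₁ ⟨hκ, hθ⟩
  refine ⟨γ, hγ, abs_sub_le_of_scale_sq hκ hθ hθ₁ (integral_nonneg fun s => sq_nonneg (D s).trace)
    ?_ (hscale.trans_eq (by rw [norm_pow, norm_eq_abs, sq_abs]))⟩
  convert hle using 3
  simp only [← hT.trace_disorder_eq_of_jordan, mul_div_right_comm _ (Matrix.trace _), mul_pow]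
  rw [integral_const_mul]
  ring

lemma units_conj (hT : HasUnimodularJet μ T T₀ A D) (M : M₂ˣ) :
    HasUnimodularJet μ (fun p s => M.val * T p s * M⁻¹.val) (M.val * T₀ * M⁻¹.val)
      (M.val * A * M⁻¹.val) (fun s => M.val * D s * M⁻¹.val) where
  toHasCenteredJet := by
    simpa using ((HasCenteredJet.const M.val).mul hT.toHasCenteredJet).mul (.const M⁻¹.val)
  stronglyMeasurable_apply p := (stronglyMeasurable_const.mul (hT.stronglyMeasurable_apply p)).mul
    stronglyMeasurable_const
  eventually_det_eq_one := hT.eventually_det_eq_one.mono fun p h s => by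
    rw [Matrix.det_units_conj, h]
  apply_zero_fst e s s' := by rw [hT.apply_zero_fst e s s']

lemma neg (hT : HasUnimodularJet μ T T₀ A D) :
    HasUnimodularJet μ (fun p s => -T p s) (-T₀) (-A) (fun s => -D s) where
  toHasCenteredJet := by
    simpa using (HasCenteredJet.const (-1)).mul hT.toHasCenteredJet
  stronglyMeasurable_apply p := (hT.stronglyMeasurable_apply p).neg
  eventually_det_eq_one := hT.eventually_det_eq_one.mono fun p h s => by
    rw [Matrix.det_neg, h, Fintype.card_fin, neg_one_sq, one_mul]
  apply_zero_fst e s s' := by rw [hT.apply_zero_fst e s s']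

lemma hasLyapunovExponent_of_units_conj (hT : HasUnimodularJet μ T T₀ A D) (M : M₂ˣ) :
    ∀ᶠ p in nhds 0, ∀ γ, HasLyapunovExponent μ (fun s => M.val * T p s * M⁻¹.val) γ →
      HasLyapunovExponent μ (T p) γ := by
  filter_upwards [hT.eventually_det_eq_one,
    mem_prod_top.mp (hT.tendsto.norm.eventually_le_const (lt_add_one ‖T₀‖))] with p hdet hle γ hγ
  exact hγ.of_units_conj (U := MonoidHom.mker (Matrix.detMonoidHom : M₂ →* ℝ))
    (hT.stronglyMeasurable_apply p) hle hdet (fun P hP => one_le_norm_of_det_eq_one hP) M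

lemma hasEllipticScaling_of_trace_eq_two (hT : HasUnimodularJet μ T T₀ A D) (htr : T₀.trace = 2)
    (hε : ε * A.trace < 0) :
    HasEllipticScaling μ T ε ((∫ s, (D s).trace ^ 2 ∂μ) / (8 * |ε * A.trace|)) := by
  obtain ⟨s₀⟩ := nonempty_of_isProbabilityMeasure μ
  have hT₀ : T₀ ≠ 1 := by
    rintro rfl
    have h := hT.trace_adjugate_mul_energy s₀
    rw [Matrix.adjugate_one, one_mul] at h
    exact hε.ne (by rw [h, mul_zero])
  obtain ⟨M, hM⟩ := exists_units_conj_eq_jordan (hT.det_eq_one s₀) htr hT₀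
  have hconj := hT.units_conj M
  rw [hM] at hconj
  have h := hconj.hasEllipticScaling_of_jordan (ε := ε) (by rwa [Matrix.trace_units_conj])
  simp only [Matrix.trace_units_conj] at h
  exact h.of_imp (hT.hasLyapunovExponent_of_units_conj M)

/-- The sign condition says that the energies `e = ε θ ^ 2` move the trace into `(-2, 2)`. -/
theorem hasEllipticScaling (hT : HasUnimodularJet μ T T₀ A D) (htr : |T₀.trace| = 2)
    (hε : T₀.trace * (ε * A.trace) < 0) :
    HasEllipticScaling μ T ε ((∫ s, (D s).trace ^ 2 ∂μ) / (8 * |ε * A.trace|)) := by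
  rcases (abs_eq zero_le_two).mp htr with htr | htr <;> rw [htr] at hε
  · exact hT.hasEllipticScaling_of_trace_eq_two htr (by linarith)
  · have h := hT.neg.hasEllipticScaling_of_trace_eq_two (ε := ε)
      (by rw [Matrix.trace_neg, htr, neg_neg]) (by rw [Matrix.trace_neg]; linarith)
    simp only [Matrix.trace_neg, neg_sq, mul_neg, abs_neg] at h
    exact h.of_imp (Eventually.of_forall fun p γ => .of_neg)

end HasUnimodularJet

end EllipticScaling

lemma abs_div_sub_le {L : ℕ} (hL : 1 ≤ L) (γ a V q : ℝ) :
    |γ / L - a * V / (8 * L * q)| ≤ |γ - V / (8 * q) * a| := by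
  have hL₁ : (1 : ℝ) ≤ L := Nat.one_le_cast.mpr hL
  have hfactor : γ / L - a * V / (8 * L * q) = (γ - V / (8 * q) * a) / L := by ring
  rw [hfactor, abs_div, Nat.abs_cast]
  exact div_le_self (abs_nonneg _) hL₁

section PowerLaw

variable {S : Type*} [MeasurableSpace S] {μ : Measure S} {η : ℝ}

lemma tendsto_rpow_nhdsGT_zero {p : ℝ} (hp : 0 < p) :
    Tendsto (fun lam : ℝ => lam ^ p) (nhdsWithin 0 (Ioi 0)) (nhdsWithin 0 (Ioi 0)) := by
  refine tendsto_nhdsWithin_iff.mpr ⟨?_, eventually_nhdsWithin_of_forall fun lam hlam =>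
    rpow_pos_of_pos hlam p⟩
  exact ((continuousAt_rpow_const 0 p (.inr hp.le)).tendsto.mono_left
    nhdsWithin_le_nhds).trans_eq (by rw [zero_rpow hp.ne'])

lemma HasEllipticScaling.exists_eventually_rpow {A : Type*} [NormedRing A] {T : ℝ × ℝ → S → A}
    {ε B : ℝ} (h : HasEllipticScaling μ T ε B) (hη₀ : 0 < η) (hη₂ : η < 2) :
    ∃ C, ∀ᶠ lam in nhdsWithin 0 (Ioi 0), ∃ γ, HasLyapunovExponent μ (T (lam, ε * lam ^ η)) γ ∧
      |γ - B * lam ^ (2 - η)| ≤ C * (lam ^ (3 * η / 2) + lam ^ (4 - 5 * η / 2)) := by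
  obtain ⟨C, hC⟩ := h
  have hcurve : Tendsto (fun lam : ℝ => (lam ^ (1 - η / 2), lam ^ (η / 2)))
      (nhdsWithin 0 (Ioi 0)) (nhdsWithin 0 (Ioi 0 ×ˢ Ioi 0)) := by
    rw [← Prod.mk_zero_zero, nhdsWithin_prod_eq]
    exact (tendsto_rpow_nhdsGT_zero (by linarith)).prodMk (tendsto_rpow_nhdsGT_zero (by linarith))
  refine ⟨C, ?_⟩
  filter_upwards [hcurve.eventually hC, self_mem_nhdsWithin] with lam hlam hpos
  rw [mem_Ioi] at hpos
  have hpow (a : ℝ) (n : ℕ) : (lam ^ a) ^ n = lam ^ (a * n) := (rpow_mul_natCast hpos.le a n).symm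
  simp only [hpow, ← rpow_add hpos, ← rpow_sub hpos, sub_add_cancel, rpow_one] at hlam
  convert hlam using 6 <;> push_cast <;> ring_nf

lemma exists_rpow_add_rpow_le (hη₁ : 4 / 5 < η) (hη₂ : η < 4 / 3) :
    ∃ δ > 0, ∀ lam : ℝ, 0 < lam → lam ≤ 1 →
      lam ^ (3 * η / 2) + lam ^ (4 - 5 * η / 2) ≤ 2 * lam ^ (2 - η + δ) := by
  refine ⟨min (5 * η / 2 - 2) (2 - 3 * η / 2), lt_min (by linarith) (by linarith),
    fun lam hpos hle => ?_⟩
  rw [two_mul]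
  gcongr ?_ + ?_ <;> refine rpow_le_rpow_of_exponent_ge hpos hle ?_
  · linarith [min_le_left (5 * η / 2 - 2) (2 - 3 * η / 2)]
  · linarith [min_le_right (5 * η / 2 - 2) (2 - 3 * η / 2)]

end PowerLaw

lemma mul_deriv_neg_of_frequently_abs_lt {f : ℝ → ℝ} {f' : ℝ} (hf : HasDerivAt f f' 0)
    (hf' : f' ≠ 0) (hlt : ∃ᶠ ρ in nhdsWithin 0 (Ioi 0), |f ρ| < |f 0|) : f 0 * f' < 0 := by
  by_contra! hnonneg
  have hf0 : f 0 ≠ 0 := by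
    obtain ⟨ρ, hρ⟩ := hlt.exists
    exact abs_pos.mp ((abs_nonneg _).trans_lt hρ)
  have hslope := ((hf.const_mul (f 0)).tendsto_slope.mono_left
    (nhdsGT_le_nhdsNE 0)).eventually_const_lt (hnonneg.lt_of_ne' (mul_ne_zero hf0 hf'))
  obtain ⟨ρ, hρ, hpos, hρ₀⟩ := (hlt.and_eventually (hslope.and self_mem_nhdsWithin)).exists
  have hgrow : f 0 * f 0 < f 0 * f ρ := by
    rwa [slope_def_field, sub_zero, div_pos_iff_of_pos_right hρ₀, sub_pos] at hpos
  have habs : f 0 * f ρ < f 0 * f 0 :=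
    calc f 0 * f ρ ≤ |f 0| * |f ρ| := by rw [← abs_mul]; exact le_abs_self _
      _ < |f 0| * |f 0| := by gcongr
      _ = f 0 * f 0 := abs_mul_abs_self _
  exact hgrow.not_gt habs

section CellTransferMatrixScaling

variable {S : Type*} [MeasurableSpace S] {μ : Measure S} {L : ℕ} {that vhat : ℕ → ℝ}
  {ttil vtil : ℕ → S → ℝ}

lemma HasLyapunovExponent.tendsto_lyapFin {lam E γ : ℝ}
    (h : HasLyapunovExponent μ (cellT L that vhat ttil vtil lam E) γ) :
    Tendsto (lyapFin L that vhat μ ttil vtil lam E) atTop (nhds (γ / L)) :=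
  (Tendsto.div_const h (L : ℝ)).congr fun N => by
    simp only [lyapFin, matNorm_eq_norm, orderedProd, mul_inv]
    ring

variable [IsProbabilityMeasure μ]

lemma exists_hasUnimodularJet_cellT (hthat : ∀ l < L, 0 < that l)
    (hmeas : ∀ l < L, Measurable (ttil l) ∧ Measurable (vtil l))
    (hbdd : ∀ l < L, ∀ s, |ttil l s| ≤ 1 ∧ |vtil l s| ≤ 1)
    (hcent : ∀ l < L, ∫ s, ttil l s ∂μ = 0 ∧ ∫ s, vtil l s ∂μ = 0) (Eb : ℝ) :
    ∃ T₀ A D, HasUnimodularJet μ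
      (fun p s => cellT L that vhat ttil vtil p.1 (Eb + p.2) s) T₀ A D := by
  obtain ⟨T₀, A, D, hjet⟩ := exists_hasCenteredJet_cellT (vhat := vhat) hthat hmeas hbdd hcent Eb
  exact ⟨T₀, A, D, hjet, fun p => stronglyMeasurable_cellT hmeas p.1 (Eb + p.2),
    (continuous_fst.tendsto' (0 : ℝ × ℝ) 0 rfl).eventually
      (eventually_det_cellT hthat fun l hl s => (hbdd l hl s).1) |>.mono fun p h => h (Eb + p.2),
    fun e s s' => by simp only [cellT, zero_mul]⟩

theorem hasEllipticScaling_cellT (hthat : ∀ l < L, 0 < that l)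
    (hmeas : ∀ l < L, Measurable (ttil l) ∧ Measurable (vtil l))
    (hbdd : ∀ l < L, ∀ s, |ttil l s| ≤ 1 ∧ |vtil l s| ≤ 1)
    (hcent : ∀ l < L, ∫ s, ttil l s ∂μ = 0 ∧ ∫ s, vtil l s ∂μ = 0) {Eb x ε : ℝ} {xσ : S → ℝ}
    (hedge : ∀ s, |(cellT L that vhat ttil vtil 0 Eb s).trace| = 2)
    (hx : ∀ s, HasDerivAt (fun E => (cellT L that vhat ttil vtil 0 E s).trace) x Eb)
    (hxσ : ∀ s, HasDerivAt (fun lam => (cellT L that vhat ttil vtil lam Eb s).trace) (xσ s) 0)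
    (hεx : ε * x ≠ 0)
    (hinside : ∃ᶠ ρ in nhdsWithin 0 (Ioi 0),
      ∀ s, |(cellT L that vhat ttil vtil 0 (Eb + ε * ρ) s).trace| < 2) :
    HasEllipticScaling μ (fun p s => cellT L that vhat ttil vtil p.1 (Eb + p.2) s) ε
      ((∫ s, xσ s ^ 2 ∂μ) / (8 * |ε * x|)) := by
  obtain ⟨s₀⟩ := nonempty_of_isProbabilityMeasure μ
  obtain ⟨T₀, A, D, hT⟩ := exists_hasUnimodularJet_cellT (vhat := vhat) hthat hmeas hbdd hcent Eb
  have hT₀ : T₀ = cellT L that vhat ttil vtil 0 Eb s₀ := by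
    rw [← hT.apply_zero s₀, Prod.fst_zero, Prod.snd_zero, add_zero]
  have hA : A.trace = x :=
    (hT.hasDerivAt_trace_energy s₀).unique (HasDerivAt.comp_const_add Eb 0 (by simpa using hx s₀))
  have hD : ∀ s, (D s).trace = xσ s := fun s =>
    (hT.hasDerivAt_trace_disorder s).unique (by simpa using hxσ s)
  have hline : HasDerivAt (fun ρ => (cellT L that vhat ttil vtil 0 (Eb + ε * ρ) s₀).trace)
      (ε * x) 0 := by
    have hρ := ((hasDerivAt_id (0 : ℝ)).const_mul ε).const_add Eb
    rw [mul_one] at hρ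
    rw [mul_comm]
    exact HasDerivAt.comp 0 (by simpa using hx s₀) hρ
  have hsign := mul_deriv_neg_of_frequently_abs_lt hline hεx (hinside.mono fun ρ hρ => by
    simpa [hedge s₀] using hρ s₀)
  simpa only [hA, hD] using hT.hasEllipticScaling (ε := ε) (by rw [hT₀, hedge])
    (by simpa [hT₀, hA] using hsign)

end CellTransferMatrixScaling

/-- **Theorem 1(i) (elliptic regime, Lyapunov exponent).**
Let `E_b` be a band edge (no band touching, i.e. `x ≠ 0`) of the periodic background
operator, with non-trivial randomness `𝐄_σ(x_σ²) > 0`.  For `4/5 < η < 4/3` and `ε ≠ 0`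
such that `E_b + ε λ^η` lies inside the band for small `λ > 0`, the Lyapunov exponent
`γ_λ(E_b + ε λ^η)` (limit of the finite-volume quantities) exists and equals
`λ^{2-η} 𝐄_σ(x_σ²) / (8 L |ε x|) + O(λ^{3η/2} + λ^{4-5η/2})`; in particular it is
`B λ^{2-η} + O(λ^{2-η+δ})` for some `δ > 0`. -/
theorem lyapunov_band_edge_elliptic
    {S : Type*} [MeasurableSpace S] (μ : Measure S) [IsProbabilityMeasure μ]
    (L : ℕ) (hL : 1 ≤ L)
    (that vhat : ℕ → ℝ) (ttil vtil : ℕ → S → ℝ)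
    (hthat : ∀ l < L, 0 < that l)
    (hmeas : ∀ l < L, Measurable (ttil l) ∧ Measurable (vtil l))
    (hbdd : ∀ l < L, ∀ σ : S, |ttil l σ| ≤ 1 ∧ |vtil l σ| ≤ 1)
    (hcent : ∀ l < L, (∫ σ, ttil l σ ∂μ) = 0 ∧ (∫ σ, vtil l σ ∂μ) = 0)
    (Eb : ℝ)
    -- `E_b` is a band edge of the periodic operator `H_0`:
    (hedge : ∀ σ : S, |(cellT L that vhat ttil vtil 0 Eb σ).trace| = 2)
    -- `x = ∂_E Tr(𝒯^E_{0,σ})|_{E=E_b}`, and no band touching: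
    (x : ℝ)
    (hx : ∀ σ : S, HasDerivAt (fun E => (cellT L that vhat ttil vtil 0 E σ).trace) x Eb)
    (hxne : x ≠ 0)
    -- `x_σ = ∂_λ Tr(𝒯^{E_b}_{λ,σ})|_{λ=0}`, with non-trivial variance:
    (xσ : S → ℝ)
    (hxσ : ∀ σ : S,
      HasDerivAt (fun lam => (cellT L that vhat ttil vtil lam Eb σ).trace) (xσ σ) 0)
    (hvar : 0 < ∫ σ, (xσ σ) ^ 2 ∂μ)
    (η ε : ℝ) (hη₁ : 4 / 5 < η) (hη₂ : η < 4 / 3) (hε : ε ≠ 0)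
    -- the sign of `ε` is such that `E_b + ε λ^η` is inside the band for small `λ`:
    (hinside : ∃ lam₁ > (0:ℝ), ∀ lam : ℝ, 0 < lam → lam < lam₁ →
      ∀ σ : S, |(cellT L that vhat ttil vtil 0 (Eb + ε * lam ^ η) σ).trace| < 2) :
    ∃ δ > (0:ℝ), ∃ C > (0:ℝ), ∃ lam₀ > (0:ℝ), ∀ lam : ℝ, 0 < lam → lam < lam₀ →
      ∃ g : ℝ,
        Tendsto (fun N : ℕ => lyapFin L that vhat μ ttil vtil lam (Eb + ε * lam ^ η) N)
          atTop (nhds g) ∧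
        |g - lam ^ (2 - η) * (∫ σ, (xσ σ) ^ 2 ∂μ) / (8 * L * |ε * x|)|
          ≤ C * (lam ^ (3 * η / 2) + lam ^ (4 - 5 * η / 2)) ∧
        |g - lam ^ (2 - η) * (∫ σ, (xσ σ) ^ 2 ∂μ) / (8 * L * |ε * x|)|
          ≤ C * lam ^ (2 - η + δ) := by
  obtain ⟨lam₁, hlam₁, hin⟩ := hinside
  have hfreq : ∃ᶠ ρ in nhdsWithin 0 (Ioi 0),
      ∀ σ, |(cellT L that vhat ttil vtil 0 (Eb + ε * ρ) σ).trace| < 2 :=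
    (tendsto_rpow_nhdsGT_zero (p := η) (by linarith)).frequently
      (Eventually.frequently (mem_of_superset (Ioo_mem_nhdsGT hlam₁) fun lam h => hin lam h.1 h.2))
  have hscaling := hasEllipticScaling_cellT hthat hmeas hbdd hcent hedge hx hxσ
    (mul_ne_zero hε hxne) hfreq
  obtain ⟨C, hC⟩ := hscaling.exists_eventually_rpow (η := η) (by linarith) (by linarith)
  obtain ⟨δ, hδ, herror⟩ := exists_rpow_add_rpow_le hη₁ hη₂
  obtain ⟨lam₀, hlam₀, hsmall⟩ := mem_nhdsGT_iff_exists_Ioo_subset.mp hC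
  refine ⟨δ, hδ, max C 1 * 2, by positivity, min lam₀ 1, lt_min hlam₀ one_pos,
    fun lam hpos hlt => ?_⟩
  obtain ⟨hlt₀, hlt₁⟩ := lt_min_iff.mp hlt
  obtain ⟨γ, hγ, hle⟩ := hsmall ⟨hpos, hlt₀⟩
  have hbound := (abs_div_sub_le hL γ _ _ _).trans hle
  refine ⟨γ / L, hγ.tendsto_lyapFin, hbound.trans ?_, hbound.trans ?_⟩
  · gcongr
    exact (le_max_left C 1).trans (le_mul_of_one_le_right (by positivity) one_le_two)
  · rw [mul_assoc]
    gcongr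
    exacts [le_max_left C 1, herror lam hpos hlt₁.le]

end BandEdge
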